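/- arXiv:0911.3810 — 3 statements merged into one kernel-verified Lean document; each statement's English description precedes it below -/
import Mathlib

section
/- Let P_ℓ denote the path with ℓ edges and let k*(P_ℓ,2) be the smallest integer k for which Builder has a winning strategy in the deterministic P_ℓ-avoidance game with 2 colors and tree size restriction k. Then liminf_{ℓ→∞} k*(P_ℓ,2)/ℓ² ≥ 8/15; equivalently, for every ε > 0 there exists ℓ₀ such that k*(P_ℓ,2) ≥ (8/15 − ε)·ℓ² for all ℓ ≥ ℓ₀. -/
open SimpleGraph Filter Asymptotics
open scoped Classical

/-- A history of the game: the sequence of edges presented so far, together with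
the colors (elements of `Fin r`, representing the colors `1,…,r`) they received. -/
abbrev EdgeHistory (V : Type) (r : ℕ) := List (Sym2 V × Fin r)

/-- A Painter strategy on vertex type `V` with `r` colors: a function assigning a color
to every pair (history, new edge). -/
abbrev PainterStrategy (V : Type) (r : ℕ) := EdgeHistory V r → Sym2 V → Fin r

/-- Auxiliary function: run a Painter strategy on a list of presented edges,
extending the given history. -/
def runPainterAux {V : Type} {r : ℕ} (π : PainterStrategy V r) :
    EdgeHistory V r → List (Sym2 V) → EdgeHistory V r
  | h, [] => h
  | h, e :: es => runPainterAux π (h ++ [(e, π h e)]) es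

/-- The colored history obtained by coloring the edges of `l` successively
according to the Painter strategy `π`. -/
def runPainter {V : Type} {r : ℕ} (π : PainterStrategy V r) (l : List (Sym2 V)) :
    EdgeHistory V r :=
  runPainterAux π [] l

/-- `G` contains a copy of `F`, i.e. a subgraph isomorphic to `F`. -/
def IsCopy {α β : Type} (F : SimpleGraph α) (G : SimpleGraph β) : Prop :=
  ∃ f : α ↪ β, ∀ u v : α, F.Adj u v → G.Adj (f u) (f v)

/-- The graph formed by the edges of color `c` in the history `h`. -/
def colorGraph {V : Type} {r : ℕ} (h : EdgeHistory V r) (c : Fin r) : SimpleGraph V :=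
  SimpleGraph.fromEdgeSet {e | (e, c) ∈ h}

/-- The history `h` contains a monochromatic copy of `F`. -/
def HasMonoCopy {α V : Type} {r : ℕ} (F : SimpleGraph α) (h : EdgeHistory V r) : Prop :=
  ∃ c : Fin r, IsCopy F (colorGraph h c)

/-- The number of edges of `G` lying entirely within the vertex set `S`. -/
noncomputable def edgesWithin {V : Type} (G : SimpleGraph V) (S : Set V) : ℕ :=
  (G.edgeSet ∩ {e | ∀ v ∈ e, v ∈ S}).ncard

/-- `m(G) ≤ d`: every subgraph `H` of `G` with at least one vertex satisfies `e_H ≤ d · v_H`. -/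
def DensityLE {V : Type} (G : SimpleGraph V) (d : ℝ) : Prop :=
  ∀ S : Finset V, S.Nonempty → (edgesWithin G (↑S : Set V) : ℝ) ≤ d * (S.card : ℝ)

/-- `G` contains no cycle and every connected component of `G` has at most `k` edges
(equivalently, `G` is acyclic and contains no connected subgraph with more than `k` edges). -/
def TreeSizeLE {V : Type} (G : SimpleGraph V) (k : ℕ) : Prop :=
  G.IsAcyclic ∧ ∀ S : Set V, (G.induce S).Connected → edgesWithin G S ≤ k

/-- A legal sequence of moves for Builder: distinct non-loop edges. -/
def ValidEdgeSeq {V : Type} (l : List (Sym2 V)) : Prop :=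
  l.Nodup ∧ ∀ e ∈ l, ¬ e.IsDiag

/-- The (uncolored) board formed by a list of edges. -/
def boardOf {V : Type} (l : List (Sym2 V)) : SimpleGraph V :=
  SimpleGraph.fromEdgeSet {e | e ∈ l}

/-- Builder has a winning strategy in the deterministic `F`-avoidance game with `r` colors
and density restriction `d`. -/
def BuilderWinsDensity {α : Type} (F : SimpleGraph α) (r : ℕ) (d : ℝ) : Prop :=
  ∃ a : ℕ, ∀ π : PainterStrategy (Fin a) r, ∃ l : List (Sym2 (Fin a)),
    ValidEdgeSeq l ∧ (∀ i : ℕ, DensityLE (boardOf (l.take i)) d) ∧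
    HasMonoCopy F (runPainter π l)

/-- Builder has a winning strategy in the deterministic `F`-avoidance game with `r` colors
and tree size restriction `k`. -/
def BuilderWinsTree {α : Type} (F : SimpleGraph α) (r k : ℕ) : Prop :=
  ∃ a : ℕ, ∀ π : PainterStrategy (Fin a) r, ∃ l : List (Sym2 (Fin a)),
    ValidEdgeSeq l ∧ (∀ i : ℕ, TreeSizeLE (boardOf (l.take i)) k) ∧
    HasMonoCopy F (runPainter π l)

/-- The Painter strategy `π` on `a` vertices never creates a monochromatic copy of `F`
against any Builder play obeying the tree size restriction `k`. -/
def PainterAvoidsTree {α : Type} (F : SimpleGraph α) (r k a : ℕ)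
    (π : PainterStrategy (Fin a) r) : Prop :=
  ∀ l : List (Sym2 (Fin a)), ValidEdgeSeq l →
    (∀ i : ℕ, TreeSizeLE (boardOf (l.take i)) k) →
    ¬ HasMonoCopy F (runPainter π l)

/-- Painter has a winning strategy in the deterministic `F`-avoidance game with `r` colors
and tree size restriction `k`. -/
def PainterWinsTree {α : Type} (F : SimpleGraph α) (r k : ℕ) : Prop :=
  ∀ a : ℕ, ∃ π : PainterStrategy (Fin a) r, PainterAvoidsTree F r k a π

/-- A sequence of `N` distinct non-loop edges on `n` vertices. -/
def ValidSeqFun {n N : ℕ} (f : Fin N → Sym2 (Fin n)) : Prop :=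
  Function.Injective f ∧ ∀ i, ¬ (f i).IsDiag

/-- The probability (with respect to the uniformly random order in which the `N` distinct
edges of the random process on `n` vertices appear) of the event `P`. -/
noncomputable def onlineProb (n N : ℕ) (P : (Fin N → Sym2 (Fin n)) → Prop) : ℝ :=
  (Set.ncard {f : Fin N → Sym2 (Fin n) | ValidSeqFun f ∧ P f} : ℝ) /
  (Set.ncard {f : Fin N → Sym2 (Fin n) | ValidSeqFun f} : ℝ)

/-- Event: playing the online strategy `π` on the random edge sequence `f` produces
a monochromatic copy of `F`. -/
def OnlineMonoCopy {α : Type} (F : SimpleGraph α) {r n N : ℕ}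
    (π : PainterStrategy (Fin n) r) (f : Fin N → Sym2 (Fin n)) : Prop :=
  HasMonoCopy F (runPainter π (List.ofFn f))

/-!
Painter colors an edge red unless that completes a red `P_2`, then blue unless that completes a
blue `P_4`, then red unless that completes a red `P_ℓ`, and otherwise blue. A red `P_ℓ` never
arises, so Builder has to build a blue `P_ℓ`. As the board is a forest, whatever hangs off different
vertices of a path is disjoint.

Of any four consecutive edges of the blue path, the last to be presented completed a blue `P_4`, so
it would have completed a red `P_ℓ`: red paths of total length `ℓ - 1` start at its two ends.

A red path is heavy too. Call a red edge strong if it completed a blue `P_4` when presented, so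
that blue paths of total length `3` start at its two ends. Of two adjacent red edges the later one
is strong, and every edge of those blue paths touches an earlier red edge. Counting the vertices
obtained in this way, the two ends of a strong edge weigh at least `6` and three vertices joined by
two strong edges weigh at least `8`. The worst pattern has every third edge of the red path not
strong, hence on average a vertex of a red path weighs at least `8/3`.

Five consecutive vertices of the blue path therefore weigh at least `8ℓ/3 - O(1)`, which amounts to
`8ℓ²/15 - O(ℓ)` vertices along the whole path.
-/

namespace PathAvoidance

section Branch

variable {V : Type*} {G : SimpleGraph V} {S T : Set V} {u v w : V}

/-- The branch of `G` at `u` away from `S`: the vertices that some path from `u` reaches without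
meeting `S`. For a forest `G` and a set `S` of neighbors of `u`, this is the component of `u` once
the edges from `u` to `S` are removed. -/
def branch (G : SimpleGraph V) (S : Set V) (u : V) : Set V :=
  {y | ∃ p : G.Walk u y, p.IsPath ∧ ∀ s ∈ S, s ∉ p.support}

lemma self_mem_branch (hu : u ∉ S) : u ∈ branch G S u :=
  ⟨.nil, .nil, fun _ hs hsu => hu (List.mem_singleton.1 hsu ▸ hs)⟩

lemma branch_anti (h : S ⊆ T) : branch G T u ⊆ branch G S u :=
  fun _ ⟨p, hp, hpT⟩ => ⟨p, hp, fun s hs => hpT s (h hs)⟩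

lemma branch_singleton_subset (hG : G.IsAcyclic) (hS : S ⊆ G.neighborSet u) (hw : G.Adj u w)
    (hwS : w ∉ S) : branch G {u} w ⊆ branch G S u := by
  rintro y ⟨p, hp, hpu⟩
  have hcons : (Walk.cons hw p).IsPath := hp.cons (hpu u rfl)
  refine ⟨_, hcons, fun s hs hsp => hwS ?_⟩
  have hsw : s = w := by simpa using hG.eq_snd_of_adj_start hcons (hS hs) hsp
  exact hsw ▸ hs

lemma disjoint_branch_insert (hG : G.IsAcyclic) (hw : G.Adj u w) :
    Disjoint (branch G (insert w S) u) (branch G {u} w) := by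
  rw [Set.disjoint_left]
  rintro y ⟨p, hp, hpS⟩ ⟨q, hq, hqu⟩
  have hpq : (⟨p, hp⟩ : G.Path u y) = ⟨.cons hw q, hq.cons (hqu u rfl)⟩ :=
    (hG.subsingleton_path u y).elim _ _
  obtain rfl : p = .cons hw q := congrArg Subtype.val hpq
  exact hpS w (Set.mem_insert w S) (by simp)

lemma pair_subset_neighborSet (p : G.Walk u v) {j : ℕ} (hj : j + 1 < p.length) :
    {p.getVert (j + 2), p.getVert j} ⊆ G.neighborSet (p.getVert (j + 1)) :=
  Set.pair_subset (p.adj_getVert_succ hj) (p.adj_getVert_succ (Nat.lt_of_succ_lt hj)).symm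

variable [Finite V]

lemma one_le_ncard_branch (hu : u ∉ S) : 1 ≤ (branch G S u).ncard :=
  (Set.ncard_pos (Set.toFinite _)).2 ⟨u, self_mem_branch hu⟩

lemma ncard_branch_insert_add_le (hG : G.IsAcyclic) (hS : S ⊆ G.neighborSet u) (hw : G.Adj u w)
    (hwS : w ∉ S) :
    (branch G (insert w S) u).ncard + (branch G {u} w).ncard ≤ (branch G S u).ncard := by
  rw [← Set.ncard_union_eq (disjoint_branch_insert hG hw) (Set.toFinite _) (Set.toFinite _)]
  exact Set.ncard_le_ncard
    (Set.union_subset (branch_anti (Set.subset_insert w S)) (branch_singleton_subset hG hS hw hwS))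
    (Set.toFinite _)

lemma one_add_ncard_branch_le (hG : G.IsAcyclic) (hS : S ⊆ G.neighborSet u) (hw : G.Adj u w)
    (hwS : w ∉ S) : 1 + (branch G {u} w).ncard ≤ (branch G S u).ncard := by
  have hu : u ∉ insert w S := by
    rintro (rfl | hu)
    exacts [G.irrefl hw, G.irrefl (hS hu)]
  exact (Nat.add_le_add_right (one_le_ncard_branch hu) _).trans
    (ncard_branch_insert_add_le hG hS hw hwS)

lemma one_add_ncard_branch_add_ncard_branch_le (hG : G.IsAcyclic) (hS : S ⊆ G.neighborSet u)
    (hv : G.Adj u v) (hvS : v ∉ S) (hw : G.Adj u w) (hwS : w ∉ S) (hvw : v ≠ w) :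
    1 + (branch G {u} v).ncard + (branch G {u} w).ncard ≤ (branch G S u).ncard := by
  have hv' : 1 + (branch G {u} v).ncard ≤ (branch G (insert w S) u).ncard :=
    one_add_ncard_branch_le hG (Set.insert_subset hw hS) hv (by simp [hvw, hvS])
  exact (Nat.add_le_add_right hv' _).trans (ncard_branch_insert_add_le hG hS hw hwS)

/-- The number of vertices of `G` hanging off the walk `p` at `p.getVert (j + 1)`, that vertex
included. The index is shifted because only the interior vertices of `p` have a weight. -/
noncomputable def spineWeight (G : SimpleGraph V) {C : SimpleGraph V} {u v : V} (p : C.Walk u v)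
    (j : ℕ) : ℕ :=
  (branch G {p.getVert (j + 2), p.getVert j} (p.getVert (j + 1))).ncard

lemma sum_spineWeight_le_ncard_branch (hG : G.IsAcyclic) {C : SimpleGraph V} (hC : C ≤ G) :
    ∀ {u v : V} (p : C.Walk u v), p.IsPath →
      ∑ j ∈ Finset.range (p.length - 1), spineWeight G p j ≤ (branch G {u} p.snd).ncard
  | _, _, .nil, _ => by simp
  | _, _, .cons _ .nil, _ => by simp
  | u, _, @Walk.cons _ _ _ x _ hux (@Walk.cons _ _ _ y _ hxy p), hp => by
    have hne : y ≠ u := by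
      rintro rfl
      simp at hp
    have ih := sum_spineWeight_le_ncard_branch hG hC (.cons hxy p) hp.of_cons
    have hsplit : (branch G {y, u} x).ncard + (branch G {x} y).ncard ≤ (branch G {u} x).ncard :=
      ncard_branch_insert_add_le hG (Set.singleton_subset_iff.2 (hC hux).symm) (hC hxy) hne
    calc ∑ j ∈ Finset.range (((p.cons hxy).cons hux).length - 1),
          spineWeight G ((p.cons hxy).cons hux) j
        = ∑ j ∈ Finset.range p.length, spineWeight G (p.cons hxy) j
            + (branch G {y, u} x).ncard := by
          simp [Finset.sum_range_succ', spineWeight]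
      _ ≤ (branch G {x} y).ncard + (branch G {y, u} x).ncard := by simpa using ih
      _ ≤ (branch G {u} x).ncard := by omega

end Branch

section Time

variable {V : Type*} {C D : SimpleGraph V} {τ : Sym2 V → ℕ} {u v x y : V} {m n t : ℕ}

/-- `C` contains a path with `n` edges that starts at `u`. -/
def HasArm (C : SimpleGraph V) (u : V) (n : ℕ) : Prop :=
  ∃ (v : V) (p : C.Walk u v), p.IsPath ∧ p.length = n

/-- Adding the edge `e` to `C` completes a path with `n` edges: arms of total length `n - 1` start
at the two ends of `e`. This reading presupposes that `e` joins two different components of `C`,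
so that the two arms are disjoint. -/
def Completes (C : SimpleGraph V) (n : ℕ) (e : Sym2 V) : Prop :=
  ∃ u v, e = s(u, v) ∧ ∃ i j, i + j + 1 = n ∧ HasArm C u i ∧ HasArm C v j

/-- The edges of `C` that are presented before time `t`, when `τ e` is the time at which the edge
`e` is presented. -/
def before (C : SimpleGraph V) (τ : Sym2 V → ℕ) (t : ℕ) : SimpleGraph V :=
  fromEdgeSet {e ∈ C.edgeSet | τ e < t}

/-- When the edge `e` is presented, it completes a path with `n` edges together with the edges of
`C` presented earlier. -/
abbrev CompletesOnArrival (C : SimpleGraph V) (τ : Sym2 V → ℕ) (n : ℕ) (e : Sym2 V) : Prop :=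
  Completes (before C τ (τ e)) n e

lemma HasArm.zero (C : SimpleGraph V) (u : V) : HasArm C u 0 :=
  ⟨u, .nil, .nil, rfl⟩

lemma HasArm.of_adj (h : C.Adj u v) : HasArm C u 1 :=
  ⟨v, h.toWalk, by simp [h.ne], by simp⟩

lemma HasArm.mono (hCD : C ≤ D) (h : HasArm C u n) : HasArm D u n := by
  obtain ⟨v, p, hp, rfl⟩ := h
  exact ⟨v, p.mapLe hCD, hp.mapLe hCD, p.length_mapLe hCD⟩

lemma HasArm.of_le (hmn : m ≤ n) (h : HasArm C u n) : HasArm C u m := by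
  obtain ⟨v, p, hp, rfl⟩ := h
  exact ⟨_, p.take m, hp.take m, by simp [hmn]⟩

lemma HasArm.exists_adj (h : HasArm C u 1) : ∃ v, C.Adj u v := by
  obtain ⟨v, p, -, hp⟩ := h
  exact ⟨v, Walk.adj_of_length_eq_one hp⟩

lemma HasArm.exists_adj_adj (h : HasArm C u 2) : ∃ v w, C.Adj u v ∧ C.Adj v w ∧ u ≠ w := by
  obtain ⟨_, _ | ⟨huv, _ | ⟨hvw, p⟩⟩, hp, hlen⟩ := h
  · simp at hlen
  · simp at hlen
  refine ⟨_, _, huv, hvw, ?_⟩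
  rintro rfl
  simp at hp

lemma HasArm.exists_adj_adj_adj (h : HasArm C u 3) :
    ∃ v w x, C.Adj u v ∧ C.Adj v w ∧ C.Adj w x ∧ u ≠ w ∧ v ≠ x := by
  obtain ⟨_, _ | ⟨huv, _ | ⟨hvw, _ | ⟨hwx, p⟩⟩⟩, hp, hlen⟩ := h
  · simp at hlen
  · simp at hlen
  · simp at hlen
  refine ⟨_, _, _, huv, hvw, hwx, ?_, ?_⟩ <;>
  · rintro rfl
    simp at hp

lemma completes_mk_iff :
    Completes C n s(u, v) ↔ ∃ i j, i + j + 1 = n ∧ HasArm C u i ∧ HasArm C v j := by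
  refine ⟨?_, fun h => ⟨u, v, rfl, h⟩⟩
  rintro ⟨a, b, hab, i, j, hij, ha, hb⟩
  rcases Sym2.eq_iff.1 hab with ⟨rfl, rfl⟩ | ⟨rfl, rfl⟩
  · exact ⟨i, j, hij, ha, hb⟩
  · exact ⟨j, i, by omega, hb, ha⟩

lemma completes_two_iff : Completes C 2 s(u, v) ↔ ∃ w, C.Adj u w ∨ C.Adj v w := by
  rw [completes_mk_iff]
  constructor
  · rintro ⟨i, j, hij, hu, hv⟩
    obtain ⟨rfl, rfl⟩ | ⟨rfl, rfl⟩ : (i = 1 ∧ j = 0) ∨ (i = 0 ∧ j = 1) := by omega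
    · exact hu.exists_adj.imp fun _ => Or.inl
    · exact hv.exists_adj.imp fun _ => Or.inr
  · rintro ⟨w, hw | hw⟩
    · exact ⟨1, 0, rfl, .of_adj hw, .zero C v⟩
    · exact ⟨0, 1, rfl, .zero C u, .of_adj hw⟩

lemma Completes.of_le {e : Sym2 V} (hm : m ≠ 0) (hmn : m ≤ n) (h : Completes C n e) :
    Completes C m e := by
  obtain ⟨u, v, rfl, i, j, hij, hu, hv⟩ := h
  exact ⟨u, v, rfl, min i (m - 1), m - 1 - min i (m - 1), by omega, hu.of_le (by omega),
    hv.of_le (by omega)⟩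

lemma before_adj : (before C τ t).Adj x y ↔ C.Adj x y ∧ τ s(x, y) < t := by
  simp only [before, fromEdgeSet_adj, Set.mem_ofPred_eq, mem_edgeSet]
  exact and_iff_left_of_imp fun h => h.1.ne

lemma before_le : before C τ t ≤ C := fun _ _ h => (before_adj.1 h).1

lemma mem_edgeSet_before {e : Sym2 V} :
    e ∈ (before C τ t).edgeSet ↔ e ∈ C.edgeSet ∧ τ e < t := by
  induction e with
  | h x y => exact before_adj

lemma completes_of_isPath {p : C.Walk u v} (hp : p.IsPath) (hm : m < p.length)
    (h : ∀ e ∈ p.edges, e ≠ s(p.getVert m, p.getVert (m + 1)) → e ∈ D.edgeSet) :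
    Completes D p.length s(p.getVert m, p.getVert (m + 1)) := by
  set f := s(p.getVert m, p.getVert (m + 1))
  have hm_edges : m < p.edges.length := by simpa using hm
  have hf : p.edges[m] = f := p.getElem_edges hm_edges
  have hnodup : (f :: (p.edges.take m ++ p.edges.drop (m + 1))).Nodup := by
    rw [← List.nodup_middle, ← hf, List.getElem_cons_drop, List.take_append_drop]
    exact hp.isTrail.edges_nodup
  have hne : ∀ e ∈ p.edges.take m ++ p.edges.drop (m + 1), e ≠ f := fun e he hef =>
    (List.nodup_cons.1 hnodup).1 (hef ▸ he)
  have htake : ∀ e ∈ (p.take m).reverse.edges, e ∈ D.edgeSet := fun e he => by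
    rw [Walk.edges_reverse, List.mem_reverse, p.edges_take] at he
    exact h e (List.mem_of_mem_take he) (hne e (List.mem_append_left _ he))
  have hdrop : ∀ e ∈ (p.drop (m + 1)).edges, e ∈ D.edgeSet := fun e he => by
    rw [p.edges_drop] at he
    exact h e (List.mem_of_mem_drop he) (hne e (List.mem_append_right _ he))
  refine completes_mk_iff.2 ⟨m, p.length - (m + 1), by omega, ?_, ?_⟩
  · exact ⟨_, _, (hp.take m).reverse.transfer htake, by
      rw [Walk.length_transfer, Walk.length_reverse, p.take_length, min_eq_left hm.le]⟩
  · exact ⟨_, _, (hp.drop (m + 1)).transfer hdrop, by rw [Walk.length_transfer, p.drop_length]⟩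

lemma exists_completesOnArrival (hτ : C.edgeSet.InjOn τ) {p : C.Walk u v} (hp : p.IsPath)
    (hlen : p.length ≠ 0) :
    ∃ m < p.length, CompletesOnArrival C τ p.length s(p.getVert m, p.getVert (m + 1)) := by
  obtain ⟨m, hm, hmax⟩ := (Finset.range p.length).exists_max_image
    (fun i => τ s(p.getVert i, p.getVert (i + 1))) (by simpa using hlen)
  rw [Finset.mem_range] at hm
  refine ⟨m, hm, completes_of_isPath hp hm fun e he hne => ?_⟩
  have heC : e ∈ C.edgeSet := p.edges_subset_edgeSet he
  have hle : τ e ≤ τ s(p.getVert m, p.getVert (m + 1)) := by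
    obtain ⟨i, hi, rfl⟩ := List.getElem_of_mem he
    rw [p.getElem_edges]
    exact hmax i (by simpa using hi)
  exact mem_edgeSet_before.2
    ⟨heC, hle.lt_of_ne fun h => hne (hτ heC (p.adj_getVert_succ hm) h)⟩

end Time

section Sequence

variable {g : ℕ → ℕ} {S : ℕ → Prop} {n : ℕ}

/-- A combinatorial condition on the weights `g j` of `n` consecutive vertices, where `S j` says
that the edge between the `j`-th and the `(j + 1)`-st of them is strong: of two adjacent edges one
is strong, the ends of a strong edge have total weight at least `6`, and three vertices joined by
two strong edges have total weight at least `8`. -/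
structure StrongEdgeWeights (g : ℕ → ℕ) (S : ℕ → Prop) (n : ℕ) : Prop where
  strong_or_strong : ∀ j, j + 2 < n → S j ∨ S (j + 1)
  six_le : ∀ j, j + 1 < n → S j → 6 ≤ g j + g (j + 1)
  eight_le : ∀ j, j + 2 < n → S j → S (j + 1) → 8 ≤ g j + g (j + 1) + g (j + 2)

lemma StrongEdgeWeights.shift {m : ℕ} (h : StrongEdgeWeights g S (n + m)) :
    StrongEdgeWeights (fun j => g (j + m)) (fun j => S (j + m)) n where
  strong_or_strong j hj := by
    simpa only [Nat.add_right_comm] using h.strong_or_strong (j + m) (by omega)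
  six_le j hj hS := by
    simpa only [Nat.add_right_comm] using h.six_le (j + m) (by omega) hS
  eight_le j hj hS hS' := by
    simpa only [Nat.add_right_comm] using
      h.eight_le (j + m) (by omega) hS (by simpa only [Nat.add_right_comm] using hS')

/-- Two vertices are cut off at the front if the rest again starts with a strong edge, and three
otherwise. -/
lemma StrongEdgeWeights.eight_mul_le_of_strong_zero (h : StrongEdgeWeights g S n)
    (h₀ : 1 < n → S 0) : 8 * n ≤ 3 * ∑ j ∈ Finset.range n, g j + 8 := by
  induction n using Nat.strong_induction_on generalizing g S with
  | _ n ih =>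
  obtain hn | ⟨m, rfl⟩ : n ≤ 1 ∨ ∃ m, n = m + 2 := by
    rcases n with _ | _ | m
    exacts [.inl (by omega), .inl le_rfl, .inr ⟨m, rfl⟩]
  · omega
  have hS₀ : S 0 := h₀ (by omega)
  by_cases hS₂ : 1 < m → S 2
  · have hrest := ih m (by omega) h.shift hS₂
    have hpair := h.six_le 0 (by omega) hS₀
    rw [Finset.sum_range_succ', Finset.sum_range_succ']
    simp only [zero_add, Nat.add_assoc, Nat.reduceAdd] at hrest hpair ⊢
    omega
  · push Not at hS₂
    obtain ⟨m, rfl⟩ : ∃ k, m = k + 1 := ⟨m - 1, by omega⟩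
    have hS₁ : S 1 := (h.strong_or_strong 1 (by omega)).resolve_right hS₂.2
    have hrest := ih m (by omega) (h.shift (m := 3)) fun hm =>
      (h.strong_or_strong 2 (by omega)).resolve_left hS₂.2
    have htriple := h.eight_le 0 (by omega) hS₀ hS₁
    rw [Finset.sum_range_succ', Finset.sum_range_succ', Finset.sum_range_succ']
    simp only [zero_add, Nat.add_assoc, Nat.reduceAdd] at hrest htriple ⊢
    omega

lemma StrongEdgeWeights.eight_mul_le (h : StrongEdgeWeights g S n) :
    8 * n ≤ 3 * ∑ j ∈ Finset.range n, g j + 16 := by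
  by_cases hS₀ : 2 < n → S 0
  · obtain hn | hn : n ≤ 2 ∨ 2 < n := by omega
    · omega
    · exact (h.eight_mul_le_of_strong_zero fun _ => hS₀ hn).trans (by omega)
  · push Not at hS₀
    obtain ⟨m, rfl⟩ : ∃ m, n = m + 1 := ⟨n - 1, by omega⟩
    have hS₁ : S 1 := (h.strong_or_strong 0 hS₀.1).resolve_left hS₀.2
    have hrest := (h.shift (m := 1)).eight_mul_le_of_strong_zero fun _ => hS₁
    rw [Finset.sum_range_succ']
    omega

lemma mul_le_sum_range_mul {b c N : ℕ}
    (h : ∀ m < N, c ≤ ∑ j ∈ Finset.range b, g (b * m + j)) :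
    N * c ≤ ∑ j ∈ Finset.range (b * N), g j := by
  induction N with
  | zero => simp
  | succ N ih =>
    rw [Nat.mul_succ, Finset.sum_range_add, Nat.succ_mul]
    exact Nat.add_le_add (ih fun m hm => h m (by omega)) (h N (by omega))

end Sequence

section Cautious

variable {V : Type*} {G R B : SimpleGraph V} {τ : Sym2 V → ℕ} {S T U : Set V} {u v w x y z : V}
  {i t ℓ : ℕ}

/-- The red-blue colorings of a forest `G`, with edges presented in the order of `τ`, that arise
from the following Painter strategy: color an edge red unless it completes a red path with two
edges; then blue unless it completes a blue path with four edges; then red unless it completes a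
red path with `ℓ` edges; and blue otherwise. -/
structure CautiousColoring (G R B : SimpleGraph V) (τ : Sym2 V → ℕ) (ℓ : ℕ) : Prop where
  isAcyclic : G.IsAcyclic
  red_le : R ≤ G
  blue_le : B ≤ G
  disjoint : Disjoint R B
  time_injOn : G.edgeSet.InjOn τ
  red_rule : ∀ e ∈ R.edgeSet, CompletesOnArrival R τ 2 e →
    CompletesOnArrival B τ 4 e ∧ ¬CompletesOnArrival R τ ℓ e
  blue_rule : ∀ e ∈ B.edgeSet, CompletesOnArrival R τ 2 e ∧
    (CompletesOnArrival B τ 4 e → CompletesOnArrival R τ ℓ e)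

namespace CautiousColoring

lemma not_blue_of_red (hc : CautiousColoring G R B τ ℓ) (hxy : R.Adj x y) : ¬B.Adj x y :=
  fun h => (hc.disjoint.le_bot : R ⊓ B ≤ ⊥) ⟨hxy, h⟩

lemma ne_of_blue_of_red (hc : CautiousColoring G R B τ ℓ) (hxy : B.Adj x y) (hxz : R.Adj x z) :
    y ≠ z := by
  rintro rfl
  exact hc.not_blue_of_red hxz hxy

lemma notMem_of_blue (hc : CautiousColoring G R B τ ℓ) (hS : S ⊆ R.neighborSet x)
    (hxy : B.Adj x y) : y ∉ S :=
  fun hy => hc.not_blue_of_red (hS hy) hxy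

lemma notMem_of_red (hc : CautiousColoring G R B τ ℓ) (hS : S ⊆ B.neighborSet x)
    (hxy : R.Adj x y) : y ∉ S :=
  fun hy => hc.not_blue_of_red hxy (hS hy)

lemma red_subset (hc : CautiousColoring G R B τ ℓ) (hS : S ⊆ R.neighborSet x) :
    S ⊆ G.neighborSet x :=
  fun _ hy => hc.red_le (hS hy)

lemma exists_earlier_red_of_blue (hc : CautiousColoring G R B τ ℓ) (hxy : B.Adj x y) :
    ∃ z, R.Adj x z ∧ τ s(x, z) < τ s(x, y) ∨ R.Adj y z := by
  obtain ⟨z, hz⟩ := completes_two_iff.1 (hc.blue_rule s(x, y) hxy).1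
  exact ⟨z, hz.imp before_adj.1 fun h => (before_adj.1 h).1⟩

lemma strong_of_earlier_red (hc : CautiousColoring G R B τ ℓ) (hxw : R.Adj x w)
    (hwy : R.Adj w y) (hlt : τ s(x, w) < τ s(w, y)) : CompletesOnArrival B τ 4 s(w, y) := by
  refine (hc.red_rule s(w, y) hwy (completes_two_iff.2 ⟨x, .inl (before_adj.2 ⟨hxw.symm, ?_⟩)⟩)).1
  rwa [Sym2.eq_swap]

lemma strong_or_strong (hc : CautiousColoring G R B τ ℓ) (hxw : R.Adj x w) (hwy : R.Adj w y)
    (hne : x ≠ y) : CompletesOnArrival B τ 4 s(x, w) ∨ CompletesOnArrival B τ 4 s(w, y) := by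
  have hτ : τ s(x, w) ≠ τ s(w, y) := fun h => by
    have hedge : s(x, w) = s(w, y) := hc.time_injOn (hc.red_le hxw) (hc.red_le hwy) h
    rcases Sym2.eq_iff.1 hedge with ⟨rfl, rfl⟩ | ⟨rfl, -⟩
    exacts [hne rfl, hne rfl]
  rcases hτ.lt_or_gt with hlt | hlt
  · exact .inr (hc.strong_of_earlier_red hxw hwy hlt)
  · rw [Sym2.eq_swap (a := x)] at hlt ⊢
    rw [Sym2.eq_swap (a := w) (b := y)] at hlt
    exact .inl (hc.strong_of_earlier_red hwy.symm hxw.symm hlt)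

lemma no_red_path (hc : CautiousColoring G R B τ ℓ) (hℓ : 2 ≤ ℓ) {p : R.Walk u v}
    (hp : p.IsPath) : p.length ≠ ℓ := by
  rintro rfl
  obtain ⟨m, hm, hlast⟩ := exists_completesOnArrival
    (hc.time_injOn.mono (edgeSet_mono hc.red_le)) hp (by omega)
  exact (hc.red_rule _ (p.adj_getVert_succ hm) (hlast.of_le two_ne_zero hℓ)).2 hlast

variable [Finite V]

lemma three_le_ncard_branch_of_blue_blue (hc : CautiousColoring G R B τ ℓ) (hxy : B.Adj x y)
    (hyz : B.Adj y z) (hxz : x ≠ z) : 3 ≤ (branch G {x} y).ncard := by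
  have hx : {x} ⊆ G.neighborSet y := Set.singleton_subset_iff.2 (hc.blue_le hxy.symm)
  have hz : 1 ≤ (branch G {y} z).ncard := one_le_ncard_branch (by simpa using hyz.ne')
  obtain ⟨a, ⟨hya, -⟩ | hza⟩ := hc.exists_earlier_red_of_blue hyz
  · have ha : 1 ≤ (branch G {y} a).ncard := one_le_ncard_branch (by simpa using hya.ne')
    have := one_add_ncard_branch_add_ncard_branch_le hc.isAcyclic hx (hc.blue_le hyz)
      (by simpa using hxz.symm) (hc.red_le hya)
      (by simpa using (hc.ne_of_blue_of_red hxy.symm hya).symm) (hc.ne_of_blue_of_red hyz hya)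
    omega
  · have ha : 1 ≤ (branch G {z} a).ncard := one_le_ncard_branch (by simpa using hza.ne')
    have hza_le := one_add_ncard_branch_le hc.isAcyclic
      (Set.singleton_subset_iff.2 (hc.blue_le hyz.symm)) (hc.red_le hza)
      (by simpa using (hc.ne_of_blue_of_red hyz.symm hza).symm)
    have hyz_le := one_add_ncard_branch_le hc.isAcyclic hx (hc.blue_le hyz)
      (by simpa using hxz.symm)
    omega

lemma four_le_ncard_branch_of_blue_blue_blue (hc : CautiousColoring G R B τ ℓ) (hux : B.Adj u x)
    (hxy : B.Adj x y) (hyz : B.Adj y z) (huy : u ≠ y) (hxz : x ≠ z) :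
    4 ≤ (branch G {u} x).ncard :=
  (Nat.add_le_add_left (hc.three_le_ncard_branch_of_blue_blue hxy hyz hxz) 1).trans
    (one_add_ncard_branch_le hc.isAcyclic (Set.singleton_subset_iff.2 (hc.blue_le hux.symm))
      (hc.blue_le hxy) (by simpa using huy.symm))

lemma one_add_ncard_branch_le_of_blue (hc : CautiousColoring G R B τ ℓ)
    (hS : S ⊆ R.neighborSet x) (hxy : B.Adj x y) :
    1 + (branch G {x} y).ncard ≤ (branch G S x).ncard :=
  one_add_ncard_branch_le hc.isAcyclic (hc.red_subset hS) (hc.blue_le hxy)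
    (hc.notMem_of_blue hS hxy)

lemma two_le_ncard_branch_of_hasArm_one (hc : CautiousColoring G R B τ ℓ) (hS : S ⊆ R.neighborSet x)
    (h : HasArm B x 1) : 2 ≤ (branch G S x).ncard := by
  obtain ⟨y, hxy⟩ := h.exists_adj
  have hy : 1 ≤ (branch G {x} y).ncard := one_le_ncard_branch (by simpa using hxy.ne')
  exact (Nat.add_le_add_left hy 1).trans (hc.one_add_ncard_branch_le_of_blue hS hxy)

lemma four_le_ncard_branch_of_hasArm_two (hc : CautiousColoring G R B τ ℓ)
    (hS : S ⊆ R.neighborSet x) (h : HasArm B x 2) : 4 ≤ (branch G S x).ncard := by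
  obtain ⟨y, z, hxy, hyz, hxz⟩ := h.exists_adj_adj
  exact (Nat.add_le_add_left (hc.three_le_ncard_branch_of_blue_blue hxy hyz hxz) 1).trans
    (hc.one_add_ncard_branch_le_of_blue hS hxy)

lemma five_le_ncard_branch_of_hasArm_three (hc : CautiousColoring G R B τ ℓ)
    (hS : S ⊆ R.neighborSet x) (h : HasArm B x 3) : 5 ≤ (branch G S x).ncard := by
  obtain ⟨y, z, a, hxy, hyz, hza, hxz, hya⟩ := h.exists_adj_adj_adj
  exact (Nat.add_le_add_left
    (hc.four_le_ncard_branch_of_blue_blue_blue hxy hyz hza hxz hya) 1).trans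
    (hc.one_add_ncard_branch_le_of_blue hS hxy)

lemma six_le_add_of_strong (hc : CautiousColoring G R B τ ℓ) (hS : S ⊆ R.neighborSet x)
    (hT : T ⊆ R.neighborSet y) (h : CompletesOnArrival B τ 4 s(x, y)) :
    6 ≤ (branch G S x).ncard + (branch G T y).ncard := by
  obtain ⟨i, j, hij, hx, hy⟩ := completes_mk_iff.1 h
  replace hx := hx.mono before_le
  replace hy := hy.mono before_le
  have hSx : 1 ≤ (branch G S x).ncard := one_le_ncard_branch fun h => R.irrefl (hS h)
  have hTy : 1 ≤ (branch G T y).ncard := one_le_ncard_branch fun h => R.irrefl (hT h)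
  obtain rfl | rfl | rfl | rfl : i = 0 ∨ i = 1 ∨ i = 2 ∨ i = 3 := by omega
  · have := hc.five_le_ncard_branch_of_hasArm_three hT (hy.of_le (by omega))
    omega
  · have := hc.two_le_ncard_branch_of_hasArm_one hS hx
    have := hc.four_le_ncard_branch_of_hasArm_two hT (hy.of_le (by omega))
    omega
  · have := hc.four_le_ncard_branch_of_hasArm_two hS hx
    have := hc.two_le_ncard_branch_of_hasArm_one hT (hy.of_le (by omega))
    omega
  · have := hc.five_le_ncard_branch_of_hasArm_three hS hx
    omega

/-- The edge `wy` came before the edge `wx`, while the vertices in `S` were joined to `w` only after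
it. Hence `S` contains neither `x` nor `y`. -/
lemma two_add_ncard_branch_le (hc : CautiousColoring G R B τ ℓ)
    (hS : ∀ s ∈ S, R.Adj w s ∧ t ≤ τ s(w, s)) (hwx : (before B τ t).Adj w x)
    (hwy : R.Adj w y) (hlt : τ s(w, y) < τ s(w, x)) :
    2 + (branch G {w} x).ncard ≤ (branch G S w).ncard := by
  obtain ⟨hwx, hxt⟩ := before_adj.1 hwx
  have hS' : S ⊆ R.neighborSet w := fun s hs => (hS s hs).1
  have hyS : y ∉ S := fun hy => (hlt.trans hxt).not_ge (hS y hy).2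
  have hy : 1 ≤ (branch G {w} y).ncard := one_le_ncard_branch (by simpa using hwy.ne')
  have := one_add_ncard_branch_add_ncard_branch_le hc.isAcyclic (hc.red_subset hS')
    (hc.blue_le hwx) (hc.notMem_of_blue hS' hwx) (hc.red_le hwy) hyS
    (hc.ne_of_blue_of_red hwx hwy)
  omega

lemma three_le_ncard_branch_of_hasArm_before_one (hc : CautiousColoring G R B τ ℓ)
    (hS : ∀ s ∈ S, R.Adj w s ∧ t ≤ τ s(w, s)) (h : HasArm (before B τ t) w 1) :
    3 ≤ (branch G S w).ncard := by
  obtain ⟨x, hwx'⟩ := h.exists_adj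
  have hwx : B.Adj w x := before_le hwx'
  have hx : {w} ⊆ G.neighborSet x := Set.singleton_subset_iff.2 (hc.blue_le hwx.symm)
  obtain ⟨y, ⟨hwy, hlt⟩ | hxy⟩ := hc.exists_earlier_red_of_blue hwx
  · have hx : 1 ≤ (branch G {w} x).ncard := one_le_ncard_branch (by simpa using hwx.ne')
    exact (Nat.add_le_add_left hx 2).trans (hc.two_add_ncard_branch_le hS hwx' hwy hlt)
  · have hy : 1 ≤ (branch G {x} y).ncard := one_le_ncard_branch (by simpa using hxy.ne')
    have hxy_le := one_add_ncard_branch_le hc.isAcyclic hx (hc.red_le hxy)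
      (by simpa using (hc.ne_of_blue_of_red hwx.symm hxy).symm)
    have hwx_le := hc.one_add_ncard_branch_le_of_blue (fun s hs => (hS s hs).1) hwx
    omega

lemma six_le_ncard_branch_of_hasArm_before_three (hc : CautiousColoring G R B τ ℓ)
    (hS : ∀ s ∈ S, R.Adj w s ∧ t ≤ τ s(w, s)) (h : HasArm (before B τ t) w 3) :
    6 ≤ (branch G S w).ncard := by
  obtain ⟨x, y, z, hwx', hxy, hyz, hwy, hxz⟩ := h.exists_adj_adj_adj
  have hwx : B.Adj w x := before_le hwx'
  replace hxy : B.Adj x y := before_le hxy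
  replace hyz : B.Adj y z := before_le hyz
  obtain ⟨a, ⟨hwa, hlt⟩ | hxa⟩ := hc.exists_earlier_red_of_blue hwx
  · exact (Nat.add_le_add_left
      (hc.four_le_ncard_branch_of_blue_blue_blue hwx hxy hyz hwy hxz) 2).trans
      (hc.two_add_ncard_branch_le hS hwx' hwa hlt)
  · have ha : 1 ≤ (branch G {x} a).ncard := one_le_ncard_branch (by simpa using hxa.ne')
    have hy := hc.three_le_ncard_branch_of_blue_blue hxy hyz hxz
    have hx_le := one_add_ncard_branch_add_ncard_branch_le hc.isAcyclic
      (Set.singleton_subset_iff.2 (hc.blue_le hwx.symm)) (hc.blue_le hxy)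
      (by simpa using hwy.symm) (hc.red_le hxa)
      (by simpa using (hc.ne_of_blue_of_red hwx.symm hxa).symm) (hc.ne_of_blue_of_red hxy hxa)
    have hwx_le := hc.one_add_ncard_branch_le_of_blue (fun s hs => (hS s hs).1) hwx
    omega

lemma eight_le_add_of_strong_of_late (hc : CautiousColoring G R B τ ℓ)
    (hS : S ⊆ R.neighborSet x) (hT : ∀ t ∈ T, R.Adj w t ∧ τ s(x, w) ≤ τ s(w, t))
    (hU : U ⊆ R.neighborSet y) (hxw : CompletesOnArrival B τ 4 s(x, w))
    (hwy : CompletesOnArrival B τ 4 s(w, y)) :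
    8 ≤ (branch G S x).ncard + (branch G T w).ncard + (branch G U y).ncard := by
  have hT' : T ⊆ R.neighborSet w := fun t ht => (hT t ht).1
  have hSx : 1 ≤ (branch G S x).ncard := one_le_ncard_branch fun h => R.irrefl (hS h)
  have hUy : 1 ≤ (branch G U y).ncard := one_le_ncard_branch fun h => R.irrefl (hU h)
  obtain ⟨i, j, hij, hx, hw⟩ := completes_mk_iff.1 hxw
  replace hx := hx.mono before_le
  obtain rfl | rfl | rfl | rfl : i = 0 ∨ i = 1 ∨ i = 2 ∨ i = 3 := by omega
  · have := hc.six_le_ncard_branch_of_hasArm_before_three hT (hw.of_le (by omega))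
    omega
  · have := hc.two_le_ncard_branch_of_hasArm_one hS hx
    have := hc.four_le_ncard_branch_of_hasArm_two hT' ((hw.mono before_le).of_le (by omega))
    obtain ⟨i', j', hij', hw', hy⟩ := completes_mk_iff.1 hwy
    obtain rfl | hj' : j' = 0 ∨ 1 ≤ j' := by omega
    · have := hc.five_le_ncard_branch_of_hasArm_three hT' ((hw'.mono before_le).of_le (by omega))
      omega
    · have := hc.two_le_ncard_branch_of_hasArm_one hU ((hy.mono before_le).of_le hj')
      omega
  · have := hc.four_le_ncard_branch_of_hasArm_two hS hx
    have := hc.three_le_ncard_branch_of_hasArm_before_one hT (hw.of_le (by omega))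
    omega
  · have := hc.five_le_ncard_branch_of_hasArm_three hS hx
    have := hc.six_le_add_of_strong hT' hU hwy
    omega

lemma eight_le_add_of_strong (hc : CautiousColoring G R B τ ℓ) (hS : S ⊆ R.neighborSet x)
    (hU : U ⊆ R.neighborSet y) (hxw : R.Adj x w) (hwy : R.Adj w y)
    (hxw_strong : CompletesOnArrival B τ 4 s(x, w))
    (hwy_strong : CompletesOnArrival B τ 4 s(w, y)) :
    8 ≤ (branch G S x).ncard + (branch G {y, x} w).ncard + (branch G U y).ncard := by
  rcases le_total (τ s(x, w)) (τ s(w, y)) with hle | hle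
  · refine hc.eight_le_add_of_strong_of_late hS ?_ hU hxw_strong hwy_strong
    rintro s (rfl | rfl)
    exacts [⟨hwy, hle⟩, ⟨hxw.symm, by rw [Sym2.eq_swap]⟩]
  · rw [Sym2.eq_swap] at hxw_strong hwy_strong hle
    rw [Sym2.eq_swap (a := x)] at hle
    have hlate : ∀ s ∈ ({y, x} : Set V), R.Adj w s ∧ τ s(y, w) ≤ τ s(w, s) := by
      rintro s (rfl | rfl)
      exacts [⟨hwy, by rw [Sym2.eq_swap]⟩, ⟨hxw.symm, hle⟩]
    have := hc.eight_le_add_of_strong_of_late hU hlate hS hwy_strong hxw_strong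
    omega

lemma strongEdgeWeights (hc : CautiousColoring G R B τ ℓ) {p : R.Walk u v} (hp : p.IsPath) :
    StrongEdgeWeights (spineWeight G p)
      (fun j => CompletesOnArrival B τ 4 s(p.getVert (j + 1), p.getVert (j + 2)))
      (p.length - 1) where
  strong_or_strong j hj :=
    hc.strong_or_strong (p.adj_getVert_succ (by omega)) (p.adj_getVert_succ (by omega)) fun h => by
      have := hp.getVert_injOn (by grind) (by grind) h
      omega
  six_le j hj hstrong :=
    hc.six_le_add_of_strong (pair_subset_neighborSet p (by omega))
      (pair_subset_neighborSet p (by omega)) hstrong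
  eight_le j hj hstrong hstrong' :=
    hc.eight_le_add_of_strong (pair_subset_neighborSet p (by omega))
      (pair_subset_neighborSet p (by omega)) (p.adj_getVert_succ (by omega))
      (p.adj_getVert_succ (by omega)) hstrong hstrong'

lemma eight_mul_length_le (hc : CautiousColoring G R B τ ℓ) {p : R.Walk u v} (hp : p.IsPath) :
    8 * (p.length - 1) ≤ 3 * (branch G {u} p.snd).ncard + 16 :=
  (hc.strongEdgeWeights hp).eight_mul_le.trans <| by
    gcongr
    exact sum_spineWeight_le_ncard_branch hc.isAcyclic hc.red_le p hp

lemma eight_mul_le_of_red_arm (hc : CautiousColoring G R B τ ℓ) (hS : S ⊆ B.neighborSet x)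
    (h : HasArm R x i) : 8 * i ≤ 3 * (branch G S x).ncard + 21 := by
  obtain ⟨v, p, hp, rfl⟩ := h
  obtain hlen | hlen : p.length = 0 ∨ 0 < p.length := Nat.eq_zero_or_pos _
  · omega
  have hsnd : R.Adj x p.snd := p.adj_snd (by simpa [← Walk.length_eq_zero_iff] using hlen.ne')
  have hpath := hc.eight_mul_length_le hp
  have hbranch := one_add_ncard_branch_le hc.isAcyclic (fun y hy => hc.blue_le (hS hy))
    (hc.red_le hsnd) (hc.notMem_of_red hS hsnd)
  omega

lemma eight_mul_le_sum_spineWeight (hc : CautiousColoring G R B τ ℓ) {p : B.Walk u v}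
    (hp : p.IsPath) {s : ℕ} (hs : s + 6 ≤ p.length) :
    8 * ℓ ≤ 3 * ∑ j ∈ Finset.range 5, spineWeight G p (s + j) + 50 := by
  set q := (p.drop (s + 1)).take 4 with hq
  have hlen : q.length = 4 := by simp [hq]; omega
  obtain ⟨m, hm, hlast⟩ := exists_completesOnArrival (p := q)
    (hc.time_injOn.mono (edgeSet_mono hc.blue_le)) ((hp.drop (s + 1)).take 4) (by omega)
  have hm4 : m < 4 := by omega
  have hget : ∀ n ≤ 4, q.getVert n = p.getVert (s + n + 1) := fun n hn => by
    rw [hq, Walk.take_getVert, Walk.drop_getVert, min_eq_right hn]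
    congr 1
    omega
  rw [hlen, hget m hm4.le, hget (m + 1) hm4] at hlast
  obtain ⟨i, j, hij, hi, hj⟩ := completes_mk_iff.1
    ((hc.blue_rule _ (p.adj_getVert_succ (by omega))).2 hlast)
  have hleft : 8 * i ≤ 3 * spineWeight G p (s + m) + 21 :=
    hc.eight_mul_le_of_red_arm (pair_subset_neighborSet p (by omega)) (hi.mono before_le)
  have hright : 8 * j ≤ 3 * spineWeight G p (s + (m + 1)) + 21 :=
    hc.eight_mul_le_of_red_arm (pair_subset_neighborSet p (by omega)) (hj.mono before_le)
  have hsum : spineWeight G p (s + m) + spineWeight G p (s + (m + 1)) ≤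
      ∑ j ∈ Finset.range 5, spineWeight G p (s + j) := by
    rw [← Finset.sum_pair (f := fun j => spineWeight G p (s + j)) m.succ_ne_self.symm]
    exact Finset.sum_le_sum_of_subset (by grind)
  omega

lemma eight_mul_sq_le (hc : CautiousColoring G R B τ ℓ) {p : B.Walk u v} (hp : p.IsPath)
    (hlen : p.length = ℓ) : 8 * ℓ ^ 2 ≤ 15 * (branch G {u} p.snd).ncard + 90 * ℓ := by
  obtain hℓ | ⟨n, rfl⟩ : ℓ ≤ 7 ∨ ∃ n, ℓ = n + 7 :=
    (le_total ℓ 7).imp_right Nat.exists_eq_add_of_le'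
  · nlinarith
  set N := (n + 6) / 5
  have hblocks : N * (8 * n + 6) ≤ ∑ j ∈ Finset.range (5 * N), 3 * spineWeight G p j :=
    mul_le_sum_range_mul fun m hm => by
      have := hc.eight_mul_le_sum_spineWeight hp (s := 5 * m) (by omega)
      rw [← Finset.mul_sum]
      omega
  have hsum : ∑ j ∈ Finset.range (5 * N), spineWeight G p j ≤ (branch G {u} p.snd).ncard :=
    (Finset.sum_le_sum_of_subset (Finset.range_mono (by omega))).trans
      (sum_spineWeight_le_ncard_branch hc.isAcyclic hc.blue_le p hp)
  have hdiv : n + 2 ≤ 5 * N := by omega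
  rw [← Finset.mul_sum] at hblocks
  nlinarith [Nat.mul_le_mul_right (8 * n + 6) hdiv]

end CautiousColoring

end Cautious

section Game

variable {V : Type} {r k ℓ : ℕ} {π : PainterStrategy V r} {l : List (Sym2 V)} {e : Sym2 V}
  {c : Fin r}

lemma runPainterAux_concat (π : PainterStrategy V r) (h : EdgeHistory V r) (l : List (Sym2 V))
    (e : Sym2 V) :
    runPainterAux π h (l ++ [e]) = runPainterAux π h l ++ [(e, π (runPainterAux π h l) e)] := by
  induction l generalizing h with
  | nil => rfl
  | cons a _ ih => exact ih _

lemma runPainter_concat (π : PainterStrategy V r) (l : List (Sym2 V)) (e : Sym2 V) :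
    runPainter π (l ++ [e]) = runPainter π l ++ [(e, π (runPainter π l) e)] :=
  runPainterAux_concat π [] l e

lemma mem_runPainter (hl : l.Nodup) :
    (e, c) ∈ runPainter π l ↔ e ∈ l ∧ π (runPainter π (l.take (l.idxOf e))) e = c := by
  induction l using List.reverseRecOn with
  | nil => simp [runPainter, runPainterAux]
  | append_singleton l a ih =>
    rw [← List.concat_eq_append, List.nodup_concat] at hl
    rw [runPainter_concat, List.mem_append, ih hl.2]
    by_cases he : e ∈ l
    · have hea : e ≠ a := fun h => hl.1 (h ▸ he)
      rw [List.idxOf_append_of_mem he, List.take_append_of_le_length List.idxOf_le_length]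
      simp [he, hea]
    · obtain rfl | hea := eq_or_ne e a
      · simp [he, List.idxOf_append, eq_comm]
      · simp [he, hea]

lemma mem_edgeSet_colorGraph_runPainter (hl : ValidEdgeSeq l) :
    e ∈ (colorGraph (runPainter π l) c).edgeSet ↔
      e ∈ l ∧ π (runPainter π (l.take (l.idxOf e))) e = c := by
  rw [colorGraph, edgeSet_fromEdgeSet, Set.mem_sdiff, Set.mem_ofPred_eq, mem_runPainter hl.1]
  exact and_iff_left_of_imp fun h => hl.2 e h.1

lemma colorGraph_runPainter_take (hl : ValidEdgeSeq l) (t : ℕ) :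
    colorGraph (runPainter π (l.take t)) c =
      before (colorGraph (runPainter π l) c) (fun e => l.idxOf e) t := by
  have hlt : ValidEdgeSeq (l.take t) :=
    ⟨hl.1.sublist (List.take_sublist t l), fun e he => hl.2 e (List.mem_of_mem_take he)⟩
  refine edgeSet_injective (Set.ext fun e => ?_)
  rw [mem_edgeSet_before, mem_edgeSet_colorGraph_runPainter hl,
    mem_edgeSet_colorGraph_runPainter hlt]
  by_cases he : e ∈ l.take t
  · have hidx : (l.take t).idxOf e = l.idxOf e := by
      conv_rhs => rw [← List.take_append_drop t l, List.idxOf_append_of_mem he]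
    have het : l.idxOf e < t := (List.mem_take_iff_idxOf_lt (List.mem_of_mem_take he)).1 he
    rw [hidx, List.take_take, min_eq_left het.le]
    simp [he, List.mem_of_mem_take he, het]
  · have het : e ∈ l → ¬l.idxOf e < t := fun hel ht => he ((List.mem_take_iff_idxOf_lt hel).2 ht)
    simp only [he, false_and, false_iff]
    exact fun h => het h.1.1 h.2

/-- The Painter strategy described at `CautiousColoring`, where color `0` is red and color `1` is
blue. -/
noncomputable def cautiousPainter (V : Type) (ℓ : ℕ) : PainterStrategy V 2 := fun h e =>
  if ¬Completes (colorGraph h 0) 2 e then 0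
  else if ¬Completes (colorGraph h 1) 4 e then 1
  else if ¬Completes (colorGraph h 0) ℓ e then 0
  else 1

lemma colorGraph_runPainter_le_boardOf (hl : l.Nodup) :
    colorGraph (runPainter π l) c ≤ boardOf l :=
  fromEdgeSet_mono fun _ he => ((mem_runPainter hl).1 he).1

lemma cautiousColoring_cautiousPainter (hl : ValidEdgeSeq l) (hG : (boardOf l).IsAcyclic) :
    CautiousColoring (boardOf l) (colorGraph (runPainter (cautiousPainter V ℓ) l) 0)
      (colorGraph (runPainter (cautiousPainter V ℓ) l) 1) (fun e => l.idxOf e) ℓ := by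
  have hcolor {c : Fin 2} {e : Sym2 V}
      (he : e ∈ (colorGraph (runPainter (cautiousPainter V ℓ) l) c).edgeSet) :=
    ((mem_edgeSet_colorGraph_runPainter hl).1 he).2
  refine ⟨hG, colorGraph_runPainter_le_boardOf hl.1, colorGraph_runPainter_le_boardOf hl.1, ?_, ?_,
    fun e he => ?_, fun e he => ?_⟩
  · rw [← disjoint_edgeSet, Set.disjoint_left]
    exact fun e hred hblue => absurd ((hcolor hred).symm.trans (hcolor hblue)) (by decide)
  · intro e he f _ hef
    rw [boardOf, edgeSet_fromEdgeSet] at he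
    exact (List.idxOf_inj he.1).1 hef
  all_goals
    have hce := hcolor he
    simp only [cautiousPainter, colorGraph_runPainter_take hl] at hce
    split_ifs at hce <;> simp_all

lemma ncard_le_edgesWithin_add_one [Finite V] {G : SimpleGraph V} {S : Set V}
    (hS : (G.induce S).Connected) : S.ncard ≤ edgesWithin G S + 1 := by
  have hmap : Set.MapsTo (Sym2.map Subtype.val) (G.induce S).edgeSet
      (G.edgeSet ∩ {e | ∀ v ∈ e, v ∈ S}) := by
    intro e he
    induction e with
    | h a b => exact ⟨he, by simp⟩
  calc S.ncard = Nat.card S := (Nat.card_coe_set_eq S).symm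
    _ ≤ Nat.card (G.induce S).edgeSet + 1 := hS.card_vert_le_card_edgeSet_add_one
    _ = (G.induce S).edgeSet.ncard + 1 := by rw [Nat.card_coe_set_eq]
    _ ≤ edgesWithin G S + 1 := Nat.add_le_add_right (Set.ncard_le_ncard_of_injOn _ hmap
        (Sym2.map.injective Subtype.val_injective).injOn (Set.toFinite _)) 1

lemma ncard_branch_le_of_treeSizeLE [Finite V] {G : SimpleGraph V} (hG : TreeSizeLE G k)
    (S : Set V) (u : V) : (branch G S u).ncard ≤ k + 1 := by
  set K := G.connectedComponentMk u
  have hK : (G.induce K.supp).Connected := K.connected_toSimpleGraph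
  have hsub : branch G S u ⊆ K.supp := fun _ ⟨p, _⟩ => ConnectedComponent.sound p.reachable.symm
  calc (branch G S u).ncard ≤ K.supp.ncard := Set.ncard_le_ncard hsub (Set.toFinite _)
    _ ≤ edgesWithin G K.supp + 1 := ncard_le_edgesWithin_add_one hK
    _ ≤ k + 1 := Nat.add_le_add_right (hG.2 _ hK) 1

lemma exists_isPath_of_isCopy_pathGraph {G : SimpleGraph V} {n : ℕ}
    (h : IsCopy (pathGraph (n + 1)) G) :
    ∃ (u v : V) (p : G.Walk u v), p.IsPath ∧ p.length = n := by
  obtain ⟨f, hf⟩ := h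
  have hchain : (List.ofFn f).IsChain G.Adj := by
    rw [List.isChain_ofFn]
    exact fun i hi => hf _ _ (by simp [pathGraph_adj])
  refine ⟨_, _, Walk.ofSupport (List.ofFn f) (by simp) hchain, ?_, ?_⟩
  · rw [Walk.isPath_def, Walk.support_ofSupport]
    exact List.nodup_ofFn.2 f.injective
  · simp [Walk.length_ofSupport]

theorem eight_mul_sq_le_of_builderWinsTree (h : BuilderWinsTree (pathGraph (ℓ + 1)) 2 k) :
    8 * ℓ ^ 2 ≤ 15 * k + 90 * ℓ + 15 := by
  obtain hℓ | hℓ : ℓ < 2 ∨ 2 ≤ ℓ := lt_or_ge ℓ 2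
  · nlinarith
  obtain ⟨a, hwin⟩ := h
  obtain ⟨l, hl, htree, c, hcopy⟩ := hwin (cautiousPainter (Fin a) ℓ)
  have hboard : TreeSizeLE (boardOf l) k := by simpa using htree l.length
  have hc := cautiousColoring_cautiousPainter (ℓ := ℓ) hl hboard.1
  obtain ⟨u, v, p, hp, hlen⟩ := exists_isPath_of_isCopy_pathGraph hcopy
  obtain rfl | rfl : c = 0 ∨ c = 1 := by omega
  · exact absurd hlen (hc.no_red_path hℓ hp)
  · have hblue := hc.eight_mul_sq_le hp hlen
    have hsize := ncard_branch_le_of_treeSizeLE hboard {u} p.snd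
    omega

end Game

end PathAvoidance

/-- lower bound of Theorem 7. For paths `P_ℓ` (with `ℓ` edges, i.e. the
path graph on `ℓ+1` vertices), `liminf k*(P_ℓ,2)/ℓ² ≥ 8/15`: for every `ε > 0` there is `ℓ₀`
such that for all `ℓ ≥ ℓ₀`, every tree size restriction `k` for which Builder has a winning
strategy in the deterministic `P_ℓ`-avoidance game with 2 colors satisfies
`k ≥ (8/15 - ε)·ℓ²`. -/
theorem statement5 :
    ∀ ε : ℝ, 0 < ε → ∃ ℓ₀ : ℕ, ∀ ℓ : ℕ, ℓ₀ ≤ ℓ →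
      ∀ k : ℕ, BuilderWinsTree (SimpleGraph.pathGraph (ℓ + 1)) 2 k →
        (8 / 15 - ε) * (ℓ : ℝ) ^ 2 ≤ (k : ℝ) := by
  intro ε hε
  obtain ⟨N, hN⟩ := exists_nat_ge (7 / ε)
  refine ⟨N + 1, fun ℓ hℓ k hk => ?_⟩
  have hbound : 8 * (ℓ : ℝ) ^ 2 ≤ 15 * k + 90 * ℓ + 15 := by
    exact_mod_cast PathAvoidance.eight_mul_sq_le_of_builderWinsTree hk
  have hℓ_one : (1 : ℝ) ≤ ℓ := by exact_mod_cast (by omega : 1 ≤ ℓ)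
  have hε_ℓ : 7 ≤ ε * ℓ := by
    rw [← div_le_iff₀' hε]
    exact hN.trans (by exact_mod_cast (by omega : N ≤ ℓ))
  nlinarith [mul_le_mul_of_nonneg_right hε_ℓ (by linarith : (0 : ℝ) ≤ ℓ)]
end

section
/- Let P_ℓ denote the path with ℓ edges and let k*(P_ℓ,2) be the smallest integer k for which Builder has a winning strategy in the deterministic P_ℓ-avoidance game with 2 colors and tree size restriction k. Then for every ℓ ≥ 1, k*(P_ℓ,2) ≤ ((9+5√3)/6) · ℓ^{2·log₂(1+√3)}. -/
open SimpleGraph Filter Asymptotics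
open scoped Classical

/-!
Builder plays on so few vertices that the tree size restriction only says that the board stays a
forest. Count the vertices of paths, and ask for a path with `2 ^ a 0` vertices in color `0` or
`2 ^ a 1` vertices in color `1`. To raise both exponents by one, force a path for the exponents
`a`, say of color `c`, and then, on new vertices, one for `a` with the exponent of `c` raised.
If the second path has color `c`, it is long enough. Otherwise an edge between ends of the two
paths, however it is colored, creates a hub: a vertex where a path of each color ends, as long as
`a` demands. An edge between two hubs doubles one of the paths. Hence the numbers of vertices
needed when the exponents sum to `n` satisfy `s (n + 2) = 2 * (s n + s (n + 1))`, so they grow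
like `(1 + √3) ^ n`, and `a 0 = a 1 ≈ log₂ ℓ` gives the bound.
-/

namespace PathAvoidanceGame

section Paths

variable {V : Type*} {G H : SimpleGraph V} {m n : ℕ} {u v x y : V}

/-- `G` contains a path from `u` to `v` with at least `n` vertices. Counting vertices instead of
edges makes the lengths of two paths add up when their ends are joined by an edge. -/
def JoinedByPath (G : SimpleGraph V) (n : ℕ) (u v : V) : Prop :=
  ∃ p : G.Walk u v, p.IsPath ∧ n ≤ p.length + 1

lemma JoinedByPath.refl (G : SimpleGraph V) (v : V) : JoinedByPath G 1 v v :=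
  ⟨.nil, .nil, by simp⟩

lemma JoinedByPath.mono (hp : JoinedByPath G n u v) (hGH : G ≤ H) (hmn : m ≤ n) :
    JoinedByPath H m u v := by
  obtain ⟨p, hp, hn⟩ := hp
  exact ⟨p.mapLe hGH, hp.mapLe hGH, by simpa using hmn.trans hn⟩

lemma JoinedByPath.append (hp : JoinedByPath G m x u) (hq : JoinedByPath G n y v) (hGH : G ≤ H)
    (hsep : ¬ G.Reachable u v) (hadj : H.Adj u v) : JoinedByPath H (m + n) x y := by
  obtain ⟨p, hp, hm⟩ := hp
  obtain ⟨q, hq, hn⟩ := hq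
  have hdisj : List.Disjoint p.support q.support := fun w hwp hwq =>
    hsep <| (p.dropUntil w hwp).reachable.symm.trans (q.dropUntil w hwq).reachable
  refine ⟨(p.mapLe hGH).append (.cons hadj (q.reverse.mapLe hGH)), ?_, ?_⟩
  · rw [Walk.isPath_def, Walk.support_append]
    simpa [List.nodup_append', hp.support_nodup, hq.support_nodup] using hdisj
  · simp only [Walk.length_append, Walk.length_cons,
      Walk.length_mapLe, Walk.length_reverse]
    omega

end Paths

lemma JoinedByPath.isCopy_pathGraph {V : Type} {G : SimpleGraph V} {ℓ n : ℕ} {u v : V}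
    (hp : JoinedByPath G n u v) (hℓ : ℓ < n) : IsCopy (pathGraph (ℓ + 1)) G := by
  obtain ⟨p, hp, hn⟩ := hp
  have hinj : Function.Injective fun i : Fin (ℓ + 1) => p.getVert i := fun i j hij =>
    Fin.ext (hp.getVert_injOn (by grind) (by grind) hij)
  refine ⟨⟨_, hinj⟩, fun i j hij => ?_⟩
  rcases pathGraph_adj.1 hij with hij | hij
  · simpa [hij] using p.adj_getVert_succ (i := i) (by omega)
  · simpa [hij] using (p.adj_getVert_succ (i := j) (by omega)).symm

lemma treeSizeLE_of_isAcyclic {V : Type} [Fintype V] {G : SimpleGraph V} (hG : G.IsAcyclic) :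
    TreeSizeLE G (Fintype.card V - 1) := by
  refine ⟨hG, fun S hS => ?_⟩
  have hedges : edgesWithin G S = (G.induce S).edgeFinset.card := by
    rw [← Finset.card_map, map_edgeFinset_induce, edgesWithin, ← Set.ncard_coe_finset]
    congr 1
    ext ⟨u, v⟩
    simp
  have htree := IsTree.card_edgeFinset ⟨hS, hG.induce S⟩
  have hcard : Fintype.card S ≤ Fintype.card V := Fintype.card_subtype_le _
  omega

section Histories

variable {V : Type} {r : ℕ} {h h₁ h₂ : EdgeHistory V r} {S S₁ S₂ : Finset V}

/-- The uncolored board after the history `h`. -/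
def board (h : EdgeHistory V r) : SimpleGraph V :=
  boardOf (h.map Prod.fst)

/-- No vertex of `S` is touched by an edge of the history `h`. -/
def Fresh (h : EdgeHistory V r) (S : Finset V) : Prop :=
  ∀ p ∈ h, ∀ v ∈ p.1, v ∉ S

/-- `h₂` contains the history `h₁`, and all its other edges lie within `S`. -/
def ExtendsWithin (S : Finset V) (h₁ h₂ : EdgeHistory V r) : Prop :=
  h₁ ⊆ h₂ ∧ ∀ p ∈ h₂, p ∈ h₁ ∨ ∀ v ∈ p.1, v ∈ S

lemma board_adj {u v : V} : (board h).Adj u v ↔ (∃ c, (s(u, v), c) ∈ h) ∧ u ≠ v := by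
  simp [board, boardOf]

lemma colorGraph_le_board (h : EdgeHistory V r) (c : Fin r) : colorGraph h c ≤ board h := by
  intro u v huv
  simp only [colorGraph, fromEdgeSet_adj, Set.mem_ofPred_eq] at huv
  exact board_adj.2 ⟨⟨c, huv.1⟩, huv.2⟩

lemma colorGraph_mono (hsub : h₁ ⊆ h₂) (c : Fin r) : colorGraph h₁ c ≤ colorGraph h₂ c :=
  fromEdgeSet_mono fun _ he => hsub he

lemma colorGraph_append_adj (h : EdgeHistory V r) (c : Fin r) {u v : V} (huv : u ≠ v) :
    (colorGraph (h ++ [(s(u, v), c)]) c).Adj u v := by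
  simp [colorGraph, huv]

lemma Fresh.mono (hS : Fresh h S) (hsub : S₁ ⊆ S) : Fresh h S₁ :=
  fun p hp v hv hvS => hS p hp v hv (hsub hvS)

lemma Fresh.of_extendsWithin (hS : Fresh h₁ S) (hext : ExtendsWithin S₁ h₁ h₂)
    (hdisj : Disjoint S₁ S) : Fresh h₂ S := fun p hp v hv =>
  (hext.2 p hp).elim (fun hp₁ => hS p hp₁ v hv)
    fun hpS => Finset.disjoint_left.1 hdisj (hpS v hv)

lemma ExtendsWithin.refl (S : Finset V) (h : EdgeHistory V r) : ExtendsWithin S h h :=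
  ⟨List.Subset.refl h, fun _ => Or.inl⟩

lemma ExtendsWithin.trans (h₁₂ : ExtendsWithin S h h₁) (h₂₃ : ExtendsWithin S h₁ h₂) :
    ExtendsWithin S h h₂ :=
  ⟨List.Subset.trans h₁₂.1 h₂₃.1, fun p hp => (h₂₃.2 p hp).elim (h₁₂.2 p) Or.inr⟩

lemma extendsWithin_append_singleton (h : EdgeHistory V r) (c : Fin r) {u v : V}
    (hu : u ∈ S) (hv : v ∈ S) : ExtendsWithin S h (h ++ [(s(u, v), c)]) := by
  refine ⟨List.subset_append_left _ _, fun p hp => ?_⟩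
  rcases List.mem_append.1 hp with hp | hp
  · exact .inl hp
  · simp_all

lemma not_reachable_of_extendsWithin (hfresh : Fresh h S₁) (hext₁ : ExtendsWithin S₁ h h₁)
    (hext₂ : ExtendsWithin S₂ h₁ h₂) (hdisj : Disjoint S₁ S₂) {u v : V} (hu : u ∈ S₁)
    (hv : v ∉ S₁) : ¬ (board h₂).Reachable u v := by
  have hclosed : ∀ x y, (board h₂).Adj x y → x ∈ S₁ → y ∈ S₁ := by
    intro x y hxy hx
    obtain ⟨⟨c, hc⟩, -⟩ := board_adj.1 hxy
    rcases hext₂.2 _ hc with hc | hS₂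
    · rcases hext₁.2 _ hc with hc | hS₁
      · exact absurd hx (hfresh _ hc x (Sym2.mem_mk_left x y))
      · exact hS₁ y (Sym2.mem_mk_right x y)
    · exact absurd (hS₂ x (Sym2.mem_mk_left x y)) (Finset.disjoint_left.1 hdisj hx)
  rintro ⟨p⟩
  induction p with
  | nil => exact hv hu
  | cons hadj _ ih => exact ih (hclosed _ _ hadj hu) hv

end Histories

section Forcing

variable {V : Type} {r : ℕ} {S S' : Finset V} {Q R : EdgeHistory V r → Prop}
  {h : EdgeHistory V r}

/-- Against every Painter, Builder can go from the history `h` to a history satisfying `Q` while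
only presenting edges within `S` that join different components of the board. -/
inductive BuilderForces (S : Finset V) (Q : EdgeHistory V r → Prop) : EdgeHistory V r → Prop
  | achieved {h : EdgeHistory V r} (hQ : Q h) : BuilderForces S Q h
  | present {h : EdgeHistory V r} {u v : V} (hu : u ∈ S) (hv : v ∈ S)
      (hsep : ¬ (board h).Reachable u v)
      (hnext : ∀ c, BuilderForces S Q (h ++ [(s(u, v), c)])) : BuilderForces S Q h

lemma BuilderForces.trans (hQ : BuilderForces S Q h) (hS : S ⊆ S')
    (hR : ∀ h', ExtendsWithin S h h' → Q h' → BuilderForces S' R h') : BuilderForces S' R h := by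
  induction hQ with
  | achieved hQ => exact hR _ (.refl _ _) hQ
  | present hu hv hsep _ ih =>
    exact .present (hS hu) (hS hv) hsep fun c =>
      ih c fun h' hext => hR h' ((extendsWithin_append_singleton _ c hu hv).trans hext)

lemma runPainterAux_append_singleton (π : PainterStrategy V r) (e : Sym2 V) (l : List (Sym2 V))
    (h : EdgeHistory V r) : runPainterAux π h (l ++ [e]) =
      runPainterAux π h l ++ [(e, π (runPainterAux π h l) e)] := by
  induction l generalizing h with
  | nil => rfl
  | cons _ _ ih => exact ih _

lemma map_fst_runPainterAux (π : PainterStrategy V r) (l : List (Sym2 V)) (h : EdgeHistory V r) :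
    (runPainterAux π h l).map Prod.fst = h.map Prod.fst ++ l := by
  induction l generalizing h with
  | nil => simp [runPainterAux]
  | cons _ _ ih => simp [runPainterAux, ih]

lemma board_runPainter (π : PainterStrategy V r) (l : List (Sym2 V)) :
    board (runPainter π l) = boardOf l := by
  simp [board, runPainter, map_fst_runPainterAux]

lemma boardOf_mono {l l' : List (Sym2 V)} (hsub : l ⊆ l') : boardOf l ≤ boardOf l' :=
  fromEdgeSet_mono fun _ he => hsub he

lemma boardOf_append_singleton (l : List (Sym2 V)) (u v : V) :
    boardOf (l ++ [s(u, v)]) = boardOf l ⊔ edge u v := by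
  rw [boardOf, boardOf, edge, ← fromEdgeSet_union]
  congr 1
  ext e
  simp [or_comm]

lemma validEdgeSeq_append_singleton {l : List (Sym2 V)} (hl : ValidEdgeSeq l) {u v : V}
    (hsep : ¬ (boardOf l).Reachable u v) : ValidEdgeSeq (l ++ [s(u, v)]) := by
  have huv : u ≠ v := fun huv => hsep (huv ▸ .refl u)
  have hnew : s(u, v) ∉ l := fun hmem =>
    hsep (Adj.reachable ((fromEdgeSet_adj _).2 ⟨hmem, huv⟩))
  refine ⟨List.nodup_append'.2 ⟨hl.1, List.nodup_singleton _, by simpa using hnew⟩, ?_⟩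
  simpa [or_imp, forall_and, huv] using hl.2

lemma BuilderForces.exists_play (hQ : BuilderForces S Q h) (π : PainterStrategy V r)
    {l : List (Sym2 V)} (hl : runPainter π l = h) (hvalid : ValidEdgeSeq l)
    (hacyc : (boardOf l).IsAcyclic) :
    ∃ l', ValidEdgeSeq l' ∧ (boardOf l').IsAcyclic ∧ Q (runPainter π l') := by
  induction hQ generalizing l with
  | achieved hQ => exact ⟨l, hvalid, hacyc, hl ▸ hQ⟩
  | @present h u v _ _ hsep _ ih =>
    rw [← hl, board_runPainter] at hsep
    refine ih (π h s(u, v)) (l := l ++ [s(u, v)]) ?_ (validEdgeSeq_append_singleton hvalid hsep) ?_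
    · rw [← hl]
      exact runPainterAux_append_singleton π _ l []
    · rw [boardOf_append_singleton]
      exact hacyc.sup_edge_of_not_reachable hsep

lemma BuilderForces.builderWinsTree {α : Type} {F : SimpleGraph α} {a : ℕ} {S : Finset (Fin a)}
    (hF : BuilderForces S (HasMonoCopy F) ([] : EdgeHistory (Fin a) r)) :
    BuilderWinsTree F r (a - 1) := by
  refine ⟨a, fun π => ?_⟩
  have hnil : (boardOf ([] : List (Sym2 (Fin a)))).IsAcyclic := by
    simp [boardOf]
  obtain ⟨l, hvalid, hacyc, hmono⟩ := hF.exists_play π (l := []) rfl ⟨.nil, by simp⟩ hnil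
  refine ⟨l, hvalid, fun i => ?_, hmono⟩
  simpa using treeSizeLE_of_isAcyclic (hacyc.anti (boardOf_mono (List.take_subset i l)))

/-- On every set of `m` untouched vertices, Builder can force `P`, playing within this set. -/
def Forceable (m : ℕ) (P : EdgeHistory V r → Finset V → Prop) : Prop :=
  ∀ h S, Fresh h S → S.card = m → BuilderForces S (P · S) h

lemma Forceable.combine {ι : Type*} {m₁ m₂ : ℕ} {P Q : ι → EdgeHistory V r → Finset V → Prop}
    {R : EdgeHistory V r → Finset V → Prop} (hP : Forceable m₁ fun h S => ∃ i, P i h S)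
    (hQ : ∀ i, Forceable m₂ (Q i))
    (hPmono : ∀ i h h' S, h ⊆ h' → P i h S → P i h' S)
    (hR : ∀ i h S, ∀ S₁ ⊆ S, ∀ S₂ ⊆ S, (∀ u ∈ S₁, ∀ v ∈ S₂, ¬ (board h).Reachable u v) →
      P i h S₁ → Q i h S₂ → BuilderForces S (R · S) h) :
    Forceable (m₁ + m₂) R := by
  intro h S hfresh hcard
  obtain ⟨S₁, hS₁, hcard₁⟩ := Finset.exists_subset_card_eq (show m₁ ≤ S.card by omega)
  have hdisj : Disjoint S₁ (S \ S₁) := Finset.disjoint_sdiff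
  have hcard₂ : (S \ S₁).card = m₂ := by
    rw [Finset.card_sdiff_of_subset hS₁]
    omega
  refine (hP h S₁ (hfresh.mono hS₁) hcard₁).trans hS₁ ?_
  rintro h₁ hext₁ ⟨i, hPi⟩
  have hfresh₁ : Fresh h₁ (S \ S₁) :=
    (hfresh.mono Finset.sdiff_subset).of_extendsWithin hext₁ hdisj
  refine (hQ i h₁ _ hfresh₁ hcard₂).trans Finset.sdiff_subset fun h₂ hext₂ hQi => ?_
  exact hR i h₂ S S₁ hS₁ _ Finset.sdiff_subset
    (fun u hu v hv => not_reachable_of_extendsWithin (hfresh.mono hS₁) hext₁ hext₂ hdisj hu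
      (Finset.mem_sdiff.1 hv).2)
    (hPmono i h₁ h₂ S₁ hext₂.1 hPi) hQi

end Forcing

section MonochromaticPaths

variable {V : Type} {r : ℕ} {S S₁ S₂ : Finset V} {x : Fin r → ℕ} {h h' : EdgeHistory V r}
  {c : Fin r}

/-- Color `c` contains a path with at least `n` vertices whose ends lie in `S`. -/
def HasPathOfColor (n : ℕ) (c : Fin r) (h : EdgeHistory V r) (S : Finset V) : Prop :=
  ∃ u ∈ S, ∃ v ∈ S, JoinedByPath (colorGraph h c) n u v

/-- Some color `c` contains a path with at least `x c` vertices whose ends lie in `S`. -/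
def HasMonoPath (x : Fin r → ℕ) (h : EdgeHistory V r) (S : Finset V) : Prop :=
  ∃ c, HasPathOfColor (x c) c h S

/-- Some vertex of `S` is, for every color `c`, the end of a path of color `c` with at least `x c`
vertices whose other end lies in `S` as well. -/
def HasHub (x : Fin r → ℕ) (h : EdgeHistory V r) (S : Finset V) : Prop :=
  ∃ v ∈ S, ∀ c, ∃ u ∈ S, JoinedByPath (colorGraph h c) (x c) u v

lemma HasPathOfColor.mono {n : ℕ} (hp : HasPathOfColor n c h S₁) (hsub : h ⊆ h') (hS : S₁ ⊆ S) :
    HasPathOfColor n c h' S := by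
  obtain ⟨u, hu, v, hv, hp⟩ := hp
  exact ⟨u, hS hu, v, hS hv, hp.mono (colorGraph_mono hsub c) le_rfl⟩

lemma HasMonoPath.mono (hp : HasMonoPath x h S₁) (hsub : h ⊆ h') (hS : S₁ ⊆ S) :
    HasMonoPath x h' S :=
  hp.imp fun _ hc => hc.mono hsub hS

lemma HasHub.mono (hx : HasHub x h S) (hsub : h ⊆ h') : HasHub x h' S := by
  obtain ⟨v, hv, hpaths⟩ := hx
  refine ⟨v, hv, fun c => ?_⟩
  obtain ⟨u, hu, hp⟩ := hpaths c
  exact ⟨u, hu, hp.mono (colorGraph_mono hsub c) le_rfl⟩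

lemma joinedByPath_append_edge {m n : ℕ} {u v y z : V}
    (hp : JoinedByPath (colorGraph h c) m y u) (hq : JoinedByPath (colorGraph h c) n z v)
    (hsep : ¬ (board h).Reachable u v) :
    JoinedByPath (colorGraph (h ++ [(s(u, v), c)]) c) (m + n) y z :=
  hp.append hq (colorGraph_mono (List.subset_append_left _ _) c)
    (fun huv => hsep (huv.mono (colorGraph_le_board h c)))
    (colorGraph_append_adj h c fun huv => hsep (huv ▸ .refl u))

lemma hasHub_one {v : V} (hv : v ∈ S) : HasHub (fun _ => 1) h S :=
  ⟨v, hv, fun _ => ⟨v, hv, .refl _ v⟩⟩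

lemma hasMonoPath_of_eq_one {v : V} (hv : v ∈ S) (hc : x c = 1) : HasMonoPath x h S :=
  ⟨c, v, hv, v, hv, hc ▸ .refl _ v⟩

lemma HasHub.builderForces_hasMonoPath (h₁ : HasHub x h S₁) (h₂ : HasHub x h S₂)
    (hS₁ : S₁ ⊆ S) (hS₂ : S₂ ⊆ S)
    (hsep : ∀ u ∈ S₁, ∀ v ∈ S₂, ¬ (board h).Reachable u v) :
    BuilderForces S (HasMonoPath (fun c => 2 * x c) · S) h := by
  obtain ⟨v, hv, hpaths₁⟩ := h₁
  obtain ⟨w, hw, hpaths₂⟩ := h₂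
  refine .present (hS₁ hv) (hS₂ hw) (hsep v hv w hw) fun c => .achieved ?_
  obtain ⟨y, hy, hp⟩ := hpaths₁ c
  obtain ⟨z, hz, hq⟩ := hpaths₂ c
  refine ⟨c, y, hS₁ hy, z, hS₂ hz, ?_⟩
  simpa only [two_mul] using joinedByPath_append_edge hp hq (hsep v hv w hw)

end MonochromaticPaths

section TwoColors

variable {V : Type} {S S₁ S₂ : Finset V} {x : Fin 2 → ℕ} {h : EdgeHistory V 2} {c d : Fin 2}

lemma hasHub_append_edge (hcd : c ≠ d) {u v y z : V} (hv : v ∈ S) (hy : y ∈ S) (hz : z ∈ S)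
    (hp : JoinedByPath (colorGraph h c) (x c) y u) (hq : JoinedByPath (colorGraph h d) (x d) z v)
    (hsep : ¬ (board h).Reachable u v) : HasHub x (h ++ [(s(u, v), c)]) S := by
  refine ⟨v, hv, fun e => ?_⟩
  obtain rfl | rfl : e = c ∨ e = d := by omega
  · exact ⟨y, hy, JoinedByPath.mono (joinedByPath_append_edge hp (.refl _ v) hsep) le_rfl
      (Nat.le_succ _)⟩
  · exact ⟨z, hz, hq.mono (colorGraph_mono (List.subset_append_left _ _) e) le_rfl⟩

lemma HasPathOfColor.builderForces_hasHub (hcd : c ≠ d) (hc : HasPathOfColor (x c) c h S₁)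
    (hd : HasPathOfColor (x d) d h S₂) (hS₁ : S₁ ⊆ S) (hS₂ : S₂ ⊆ S)
    (hsep : ∀ u ∈ S₁, ∀ v ∈ S₂, ¬ (board h).Reachable u v) :
    BuilderForces S (HasHub x · S) h := by
  obtain ⟨y, hy, u, hu, hp⟩ := hc
  obtain ⟨z, hz, v, hv, hq⟩ := hd
  refine .present (hS₁ hu) (hS₂ hv) (hsep u hu v hv) fun e => .achieved ?_
  obtain rfl | rfl : e = c ∨ e = d := by omega
  · exact hasHub_append_edge hcd (hS₂ hv) (hS₁ hy) (hS₂ hz) hp hq (hsep u hu v hv)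
  · rw [Sym2.eq_swap]
    exact hasHub_append_edge hcd.symm (hS₁ hu) (hS₂ hz) (hS₁ hy) hq hp
      fun hvu => hsep u hu v hv hvu.symm

lemma forceable_hasMonoPath_or_hasHub {m₁ m₂ : ℕ} (h₁ : Forceable (V := V) m₁ (HasMonoPath x))
    (h₂ : ∀ c, Forceable (V := V) m₂ (HasMonoPath (Function.update x c (2 * x c)))) :
    Forceable (V := V) (m₁ + m₂) fun h S => HasMonoPath (fun c => 2 * x c) h S ∨ HasHub x h S := by
  refine h₁.combine h₂ (fun _ _ _ _ hsub hp => hp.mono hsub subset_rfl) ?_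
  rintro c h S S₁ hS₁ S₂ hS₂ hsep hc ⟨d, hd⟩
  by_cases hdc : d = c
  · subst hdc
    rw [Function.update_self] at hd
    exact .achieved (.inl ⟨d, hd.mono (List.Subset.refl h) hS₂⟩)
  · rw [Function.update_of_ne hdc] at hd
    exact (hc.builderForces_hasHub (Ne.symm hdc) hd hS₁ hS₂ hsep).trans subset_rfl
      fun _ _ hhub => .achieved (.inr hhub)

lemma forceable_hasMonoPath_two_mul {m : ℕ} (hm : Forceable (V := V) m fun h S =>
      HasMonoPath (fun c => 2 * x c) h S ∨ HasHub x h S) :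
    Forceable (V := V) (m + m) (HasMonoPath fun c => 2 * x c) := by
  refine Forceable.combine (ι := Unit)
    (P := fun _ h S => HasMonoPath (fun c => 2 * x c) h S ∨ HasHub x h S) (by simpa using hm)
    (fun _ => hm)
    (fun _ _ _ _ hsub => Or.imp (fun hp => hp.mono hsub subset_rfl) fun hx => hx.mono hsub) ?_
  rintro - h S S₁ hS₁ S₂ hS₂ hsep (hpath | hhub₁) hor₂
  · exact .achieved (hpath.mono (List.Subset.refl h) hS₁)
  rcases hor₂ with hpath | hhub₂
  · exact .achieved (hpath.mono (List.Subset.refl h) hS₂)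
  · exact hhub₁.builderForces_hasMonoPath hhub₂ hS₁ hS₂ hsep

end TwoColors

/-- The number of vertices on which Builder forces a path with `2 ^ a 0` vertices in color `0` or
`2 ^ a 1` vertices in color `1`, where `n = a 0 + a 1 > 0`. The value at `0` is chosen such that
the recursion also holds for `n = 2`. -/
def boardSize : ℕ → ℕ
  | 0 => 0
  | 1 => 1
  | n + 2 => 2 * (boardSize n + boardSize (n + 1))

lemma boardSize_pos {n : ℕ} (hn : n ≠ 0) : 0 < boardSize n := by
  induction n using Nat.twoStepInduction with
  | zero => exact absurd rfl hn
  | one => exact Nat.one_pos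
  | more n _ ih =>
    have := ih n.succ_ne_zero
    simp only [boardSize]
    omega

lemma forceable_hasMonoPath_two_pow_succ {V : Type} (a : Fin 2 → ℕ)
    (ha : ∑ c, a c ≠ 0 →
      Forceable (V := V) (boardSize (∑ c, a c)) (HasMonoPath fun c => 2 ^ a c))
    (hupdate : ∀ c, Forceable (V := V) (boardSize ((∑ c, a c) + 1))
      (HasMonoPath fun d => 2 ^ Function.update a c (a c + 1) d)) :
    Forceable (V := V) (boardSize ((∑ c, a c) + 2)) (HasMonoPath fun c => 2 ^ (a c + 1)) := by
  suffices hhub : Forceable (V := V) (boardSize (∑ c, a c) + boardSize ((∑ c, a c) + 1)) fun h S =>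
      HasMonoPath (fun c => 2 * 2 ^ a c) h S ∨ HasHub (fun c => 2 ^ a c) h S by
    simpa only [boardSize, two_mul, pow_succ'] using forceable_hasMonoPath_two_mul hhub
  by_cases hsum : ∑ c, a c = 0
  · intro h S _ hcard
    obtain ⟨v, hv⟩ : S.Nonempty := Finset.card_pos.1 (by simp [hcard, hsum, boardSize])
    have hzero : ∀ c, a c = 0 := by simpa using hsum
    exact .achieved (.inr (by simpa [hzero] using hasHub_one hv))
  · refine forceable_hasMonoPath_or_hasHub (ha hsum) fun c => ?_
    have hpow : Function.update (fun d => 2 ^ a d) c (2 * 2 ^ a c) =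
        fun d => 2 ^ Function.update a c (a c + 1) d := by
      ext d
      simp only [Function.apply_update (fun _ k => 2 ^ k), pow_succ']
    exact hpow ▸ hupdate c

theorem forceable_hasMonoPath_two_pow {V : Type} {n : ℕ} (hn : n ≠ 0) (a : Fin 2 → ℕ)
    (ha : ∑ c, a c = n) :
    Forceable (V := V) (boardSize n) (HasMonoPath fun c => 2 ^ a c) := by
  induction n using Nat.strong_induction_on generalizing a with
  | _ n ih =>
    by_cases hzero : ∃ c, a c = 0
    · obtain ⟨c, hc⟩ := hzero
      intro h S _ hcard
      obtain ⟨v, hv⟩ := Finset.card_pos.1 (hcard ▸ boardSize_pos hn)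
      exact .achieved (hasMonoPath_of_eq_one (c := c) hv (by simp [hc]))
    push Not at hzero
    obtain ⟨b, rfl⟩ : ∃ b : Fin 2 → ℕ, a = fun c => b c + 1 :=
      ⟨fun c => a c - 1, funext fun c => (Nat.succ_pred (hzero c)).symm⟩
    obtain rfl : n = (∑ c, b c) + 2 := by simp [← ha, Finset.sum_add_distrib]
    refine forceable_hasMonoPath_two_pow_succ b (fun hb => ih _ (by omega) hb b rfl) fun c =>
      ih _ (by omega) (by omega) _ ?_
    rw [Finset.sum_update_of_mem (Finset.mem_univ c), ← Finset.erase_eq, add_right_comm,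
      Finset.add_sum_erase _ _ (Finset.mem_univ c)]

lemma builderWinsTree_pathGraph {ℓ n : ℕ} (hn : n ≠ 0) (hℓ : ℓ < 2 ^ n) :
    BuilderWinsTree (pathGraph (ℓ + 1)) 2 (boardSize (2 * n) - 1) := by
  have hforce := forceable_hasMonoPath_two_pow (V := Fin (boardSize (2 * n)))
    (n := 2 * n) (by omega) (fun _ => n) (by simp) [] Finset.univ (by simp [Fresh]) (by simp)
  refine (hforce.trans subset_rfl ?_).builderWinsTree
  rintro h - ⟨c, u, -, v, -, hp⟩
  exact .achieved ⟨c, hp.isCopy_pathGraph hℓ⟩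

lemma two_mul_sqrt_three_mul_boardSize (n : ℕ) :
    2 * √3 * boardSize n = (1 + √3) ^ n - (1 - √3) ^ n := by
  have hsq : √3 ^ 2 = (3 : ℝ) := Real.sq_sqrt (by norm_num)
  induction n using Nat.twoStepInduction with
  | zero => simp [boardSize]
  | one => simp [boardSize]; ring
  | more n ih₀ ih₁ =>
    rw [boardSize]
    push_cast
    linear_combination 2 * ih₀ + 2 * ih₁ - ((1 + √3) ^ n - (1 - √3) ^ n) * hsq

lemma boardSize_two_mul_le (n : ℕ) :
    (boardSize (2 * n) : ℝ) ≤ ((1 + √3) ^ 2) ^ n / (2 * √3) := by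
  have hnonneg : 0 ≤ (1 - √3) ^ (2 * n) := (even_two_mul n).pow_nonneg _
  rw [le_div_iff₀' (by positivity), two_mul_sqrt_three_mul_boardSize, ← pow_mul]
  linarith

lemma pow_natLog_le_rpow {b : ℕ} (hb : 1 < b) {y : ℝ} (hy : 1 ≤ y) {ℓ : ℕ} (hℓ : ℓ ≠ 0) :
    y ^ Nat.log b ℓ ≤ (ℓ : ℝ) ^ Real.logb b y := by
  have hb' : (1 : ℝ) < b := by exact_mod_cast hb
  calc y ^ Nat.log b ℓ = ((b : ℝ) ^ Real.logb b y) ^ Nat.log b ℓ := by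
        rw [Real.rpow_logb (by positivity) hb'.ne' (by positivity)]
    _ = ((b : ℝ) ^ Nat.log b ℓ) ^ Real.logb b y := Real.rpow_pow_comm (by positivity) _ _
    _ ≤ (ℓ : ℝ) ^ Real.logb b y := by
        refine Real.rpow_le_rpow (by positivity) ?_ (Real.logb_nonneg hb' hy)
        exact_mod_cast Nat.pow_log_le_self b hℓ

end PathAvoidanceGame

open PathAvoidanceGame

/-- upper bound of Theorem 7. For every `ℓ ≥ 1`, we have
`k*(P_ℓ,2) ≤ ((9+5√3)/6)·ℓ^(2·log₂(1+√3))`: there is a tree size restriction `k` below this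
bound for which Builder has a winning strategy in the deterministic `P_ℓ`-avoidance game
with 2 colors. -/
theorem statement6 (ℓ : ℕ) (hℓ : 1 ≤ ℓ) :
    ∃ k : ℕ, BuilderWinsTree (SimpleGraph.pathGraph (ℓ + 1)) 2 k ∧
      (k : ℝ) ≤ (9 + 5 * Real.sqrt 3) / 6 *
        (ℓ : ℝ) ^ (2 * Real.logb 2 (1 + Real.sqrt 3)) := by
  have hℓ₀ : ℓ ≠ 0 := by omega
  set n := Nat.log 2 ℓ
  refine ⟨boardSize (2 * (n + 1)) - 1,
    builderWinsTree_pathGraph n.succ_ne_zero (Nat.lt_pow_succ_log_self one_lt_two ℓ), ?_⟩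
  have hconst : (1 + √3) ^ 2 / (2 * √3) ≤ (9 + 5 * √3) / 6 := by
    rw [div_le_iff₀ (by positivity)]
    nlinarith [Real.sq_sqrt (show (0 : ℝ) ≤ 3 by norm_num), Real.sqrt_nonneg 3]
  calc ((boardSize (2 * (n + 1)) - 1 : ℕ) : ℝ)
      ≤ boardSize (2 * (n + 1)) := by exact_mod_cast Nat.sub_le _ _
    _ ≤ ((1 + √3) ^ 2) ^ (n + 1) / (2 * √3) := boardSize_two_mul_le _
    _ = (1 + √3) ^ 2 / (2 * √3) * ((1 + √3) ^ 2) ^ n := by ring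
    _ ≤ (9 + 5 * √3) / 6 * (ℓ : ℝ) ^ Real.logb 2 ((1 + √3) ^ 2) := by
      gcongr
      exact_mod_cast pow_natLog_le_rpow one_lt_two
        (one_le_pow₀ (le_add_of_nonneg_right (Real.sqrt_nonneg 3))) hℓ₀
    _ = (9 + 5 * √3) / 6 * (ℓ : ℝ) ^ (2 * Real.logb 2 (1 + √3)) := by
      rw [Real.logb_pow, Nat.cast_ofNat]
end

section
/- Let C_ℓ denote the cycle with ℓ edges, where ℓ ≥ 3. Then Builder has a winning strategy in the deterministic C_ℓ-avoidance game with 2 colors and density restriction d = ℓ/(ℓ−1). -/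
open SimpleGraph Filter Asymptotics
open scoped Classical

/-!
Write `ℓ = k + 1`. By joining the roots of binomial trees again and again, Builder forces a large
monochromatic binomial tree while the board is still a forest, and this tree contains a spider with
many long legs. Builder joins the ends of the legs in cyclic order by new edges: if one of these
gets the color of the spider, it closes a cycle through two legs, and otherwise the new edges form a
cycle in the other color. The same move can be made on a monochromatic cycle of length `c * n`,
where every `c`-th vertex is joined to the next one of these; it yields a cycle of length `c + 1` or
`n`. For `n = k * (k + 1)`, a suitable spider gives a cycle of length `(n - 1) * n` or `n`, hence
one of length `n` in either case, and with `c = k` this becomes a cycle of length `k + 1` in either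
case.

The density stays below `(k + 1) / k` since at every stage the board is a forest to which ears with
at least `k + 1` edges have been added: an ear with `t` edges has `t - 1` new vertices, and
`k * t ≤ (k + 1) * (t - 1)` for `t ≥ k + 1`. So it is essential that the vertices of the cycle
obtained in a step have not been used to pay for edges outside this cycle.
-/

open scoped Finset

namespace CycleGame

section Charging

variable {V ι : Type*} {k t : ℕ} {X Y : Finset (Sym2 V)} {I J : Set V} {a : ℕ → V}

/-- The edges in `X` can be paid for by the vertices in `I`, each of which pays for `(k + 1) / k`
edges. For `I = Set.univ` this bounds the density of `X` by `(k + 1) / k`; if `I` is smaller, then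
the vertices outside `I` are still available to pay for further edges. -/
def Chargeable (k : ℕ) (X : Finset (Sym2 V)) (I : Set V) : Prop :=
  ∀ S : Finset V, k * #(X ∩ S.sym2) ≤ (k + 1) * #{v ∈ S | v ∈ I}

lemma Chargeable.mono (h : Chargeable k X I) (hX : Y ⊆ X) (hI : I ⊆ J) : Chargeable k Y J := by
  intro S
  calc k * #(Y ∩ S.sym2) ≤ k * #(X ∩ S.sym2) := by gcongr
    _ ≤ (k + 1) * #{v ∈ S | v ∈ I} := h S
    _ ≤ (k + 1) * #{v ∈ S | v ∈ J} := by gcongr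

lemma chargeable_empty (k : ℕ) (I : Set V) : Chargeable k ∅ I := fun S => by simp

lemma Chargeable.of_card_le (h : ∀ S : Finset V, #(X ∩ S.sym2) ≤ #{v ∈ S | v ∈ I}) :
    Chargeable k X I :=
  fun S => Nat.mul_le_mul k.le_succ (h S)

lemma Chargeable.union (hX : Chargeable k X I) (hY : Chargeable k Y J) (hIJ : Disjoint I J) :
    Chargeable k (X ∪ Y) (I ∪ J) := by
  intro S
  have hcard : #{v ∈ S | v ∈ I ∪ J} = #{v ∈ S | v ∈ I} + #{v ∈ S | v ∈ J} := by
    simp only [Set.mem_union, Finset.filter_or]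
    exact Finset.card_union_of_disjoint
      (Finset.disjoint_filter.2 fun v _ hv => Set.disjoint_left.1 hIJ hv)
  calc k * #((X ∪ Y) ∩ S.sym2) ≤ k * (#(X ∩ S.sym2) + #(Y ∩ S.sym2)) := by
        rw [Finset.union_inter_distrib_right]
        gcongr
        exact Finset.card_union_le _ _
    _ ≤ (k + 1) * (#{v ∈ S | v ∈ I} + #{v ∈ S | v ∈ J}) := by
        rw [mul_add, mul_add]
        exact add_le_add (hX S) (hY S)
    _ = _ := by rw [← hcard]; congr!

lemma Chargeable.biUnion {s : Finset ι} {X : ι → Finset (Sym2 V)} {I : ι → Set V}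
    (h : ∀ i ∈ s, Chargeable k (X i) (I i)) (hI : (s : Set ι).PairwiseDisjoint I) :
    Chargeable k (s.biUnion X) (⋃ i ∈ s, I i) := by
  induction s using Finset.induction_on with
  | empty => simpa using chargeable_empty k ∅
  | insert i s hi ih =>
    rw [Finset.biUnion_insert, Finset.set_biUnion_insert]
    rw [Finset.coe_insert] at hI
    refine (h i (s.mem_insert_self i)).union
      (ih (fun j hj => h j (Finset.mem_insert_of_mem hj)) (hI.subset (Set.subset_insert i s))) ?_
    refine Set.disjoint_iUnion₂_right.2 fun j hj => ?_
    exact hI (Set.mem_insert i s) (Set.mem_insert_of_mem i hj) fun hij => hi (hij ▸ hj)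

/-- The edges of the walk `a 0, a 1, …, a t`. -/
noncomputable def pathEdges (t : ℕ) (a : ℕ → V) : Finset (Sym2 V) :=
  (Finset.range t).image fun i => s(a i, a (i + 1))

lemma mem_pathEdges {e : Sym2 V} : e ∈ pathEdges t a ↔ ∃ i < t, s(a i, a (i + 1)) = e := by
  simp [pathEdges]

lemma card_pathEdges_inter_le (hinj : Set.InjOn a (Set.Ioo 0 t)) {S : Finset V} {j : ℕ}
    (hj : j ∈ Set.Ioo 0 t) (hjS : a j ∉ S) :
    #(pathEdges t a ∩ S.sym2) ≤ #{v ∈ S | v ∈ a '' Set.Ioo 0 t} := by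
  have hsub : pathEdges t a ∩ S.sym2 ⊆
      {i ∈ Finset.range t | a i ∈ S ∧ a (i + 1) ∈ S}.image fun i => s(a i, a (i + 1)) := by
    intro e he
    obtain ⟨he, heS⟩ := Finset.mem_inter.1 he
    obtain ⟨i, hi, rfl⟩ := mem_pathEdges.1 he
    exact Finset.mem_image_of_mem _
      (Finset.mem_filter.2 ⟨Finset.mem_range.2 hi, Finset.mk_mem_sym2_iff.1 heS⟩)
  have hne {i : ℕ} (hi : a i ∈ S) : i ≠ j := fun hij => hjS (hij ▸ hi)
  refine (Finset.card_le_card hsub).trans (Finset.card_image_le.trans ?_)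
  -- Each edge is charged to its endpoint nearer to the missing vertex `a j`.
  let pay (i : ℕ) : ℕ := if i < j then i + 1 else i
  have hpay {i : ℕ} (hi : i < t) : i ≠ j → i + 1 ≠ j → pay i ∈ Set.Ioo 0 t := by
    simp only [pay, Set.mem_Ioo] at hj ⊢
    intro _ _
    split_ifs <;> omega
  apply Finset.card_le_card_of_injOn (fun i => a (pay i))
  · intro i hi
    obtain ⟨hit, hiS, hiS'⟩ : i < t ∧ a i ∈ S ∧ a (i + 1) ∈ S := by simpa using hi
    refine Finset.mem_filter.2 ⟨?_, pay i, hpay hit (hne hiS) (hne hiS'), rfl⟩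
    simp only [pay]
    split_ifs <;> assumption
  · intro i hi i' hi' h
    obtain ⟨hit, hiS, hiS'⟩ : i < t ∧ a i ∈ S ∧ a (i + 1) ∈ S := by simpa using hi
    obtain ⟨hit', hiS₁, hiS₁'⟩ : i' < t ∧ a i' ∈ S ∧ a (i' + 1) ∈ S := by simpa using hi'
    have hpp : pay i = pay i' :=
      hinj (hpay hit (hne hiS) (hne hiS')) (hpay hit' (hne hiS₁) (hne hiS₁')) h
    have := hne hiS'
    have := hne hiS₁'
    simp only [pay] at hpp
    split_ifs at hpp <;> omega

lemma chargeable_pathEdges (ht : k + 1 ≤ t) (hinj : Set.InjOn a (Set.Ioo 0 t)) :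
    Chargeable k (pathEdges t a) (a '' Set.Ioo 0 t) := by
  intro S
  by_cases hS : ∃ j ∈ Set.Ioo 0 t, a j ∉ S
  · obtain ⟨j, hj, hjS⟩ := hS
    exact Nat.mul_le_mul k.le_succ (card_pathEdges_inter_le hinj hj hjS)
  · push Not at hS
    have hedges : #(pathEdges t a ∩ S.sym2) ≤ t :=
      calc #(pathEdges t a ∩ S.sym2) ≤ #(pathEdges t a) :=
            Finset.card_le_card Finset.inter_subset_left
        _ ≤ #(Finset.range t) := Finset.card_image_le
        _ = t := Finset.card_range t
    have hinner : t - 1 ≤ #{v ∈ S | v ∈ a '' Set.Ioo 0 t} := by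
      rw [← tsub_zero (t - 1), Nat.sub_right_comm, ← Nat.card_Ioo]
      refine Finset.card_le_card_of_injOn a (fun i hi => ?_) (by simpa using hinj)
      have hi : i ∈ Set.Ioo 0 t := by simpa using hi
      exact Finset.mem_filter.2 ⟨hS i hi, i, hi, rfl⟩
    obtain ⟨s, rfl⟩ := Nat.exists_eq_add_of_le' ht
    calc k * #(pathEdges (s + (k + 1)) a ∩ S.sym2) ≤ k * (s + (k + 1)) := by gcongr
      _ ≤ (k + 1) * (s + (k + 1) - 1) := by rw [← add_assoc, Nat.add_sub_cancel]; nlinarith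
      _ ≤ _ := by gcongr

/-- Ears of length at least `k + 1` pay for themselves with their inner vertices. -/
lemma Chargeable.of_ears {s : Finset ι} {t : ι → ℕ} {a : ι → ℕ → V} (ht : ∀ i ∈ s, k + 1 ≤ t i)
    (hinj : ∀ i ∈ s, Set.InjOn (a i) (Set.Ioo 0 (t i)))
    (hdisj : (s : Set ι).PairwiseDisjoint fun i => a i '' Set.Ioo 0 (t i))
    (hrest : Chargeable k (X \ s.biUnion fun i => pathEdges (t i) (a i)) I)
    (hI : ∀ i ∈ s, ∀ x ∈ Set.Ioo 0 (t i), a i x ∉ I)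
    (hJ : ∀ i ∈ s, ∀ x ∈ Set.Ioo 0 (t i), a i x ∈ J) (hIJ : I ⊆ J) : Chargeable k X J := by
  have hears := Chargeable.biUnion (fun i hi => chargeable_pathEdges (ht i hi) (hinj i hi)) hdisj
  refine (hrest.union hears ?_).mono ?_ ?_
  · refine Set.disjoint_iUnion₂_right.2 fun i hi => Set.disjoint_right.2 ?_
    rintro _ ⟨x, hx, rfl⟩
    exact hI i hi x hx
  · rw [Finset.sdiff_union_self_eq_union]
    exact Finset.subset_union_left
  · refine Set.union_subset hIJ (Set.iUnion₂_subset fun i hi => ?_)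
    rintro _ ⟨x, hx, rfl⟩
    exact hJ i hi x hx

end Charging

section Paths

variable {V : Type*} {G H : SimpleGraph V} {n s t : ℕ} {a b p : ℕ → V}

/-- The vertices `a 0, a 1, …, a t` form a path with `t` edges in `G`; the remaining values of `a`
are irrelevant. -/
structure IsPathIn (G : SimpleGraph V) (t : ℕ) (a : ℕ → V) : Prop where
  injOn : Set.InjOn a (Set.Iic t)
  adj : ∀ i < t, G.Adj (a i) (a (i + 1))

lemma IsPathIn.mono (h : IsPathIn G t a) (hG : G ≤ H) (hs : s ≤ t) : IsPathIn H s a :=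
  ⟨h.injOn.mono (Set.Iic_subset_Iic.2 hs), fun i hi => hG (h.adj i (hi.trans_le hs))⟩

/-- The walk `r, b 0, b 1, …`. -/
def pathCons (r : V) (b : ℕ → V) : ℕ → V
  | 0 => r
  | i + 1 => b i

lemma pathEdges_pathCons (r : V) (b : ℕ → V) (t : ℕ) :
    pathEdges (t + 1) (pathCons r b) = insert s(r, b 0) (pathEdges t b) := by
  rw [pathEdges, Finset.range_add_one', Finset.image_insert, Finset.map_eq_image,
    Finset.image_image]
  rfl

lemma IsPathIn.cons {r : V} (h : IsPathIn G t b) (hr : G.Adj r (b 0)) (hrb : ∀ i ≤ t, b i ≠ r) :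
    IsPathIn G (t + 1) (pathCons r b) where
  injOn := by
    rintro (_ | i) hi (_ | j) hj hij
    · rfl
    · exact absurd hij.symm (hrb j (Nat.le_of_succ_le_succ hj))
    · exact absurd hij (hrb i (Nat.le_of_succ_le_succ hi))
    · rw [h.injOn (Nat.le_of_succ_le_succ hi) (Nat.le_of_succ_le_succ hj) hij]
  adj := by
    rintro (_ | i) hi
    · exact hr
    · exact h.adj i (Nat.lt_of_succ_lt_succ hi)

/-- For walks `a` and `b` with `a 0 = b 0`, the walk `a s, …, a 1, a 0, b 1, b 2, …`. -/
def pathJoin (s : ℕ) (a b : ℕ → V) (i : ℕ) : V :=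
  if i ≤ s then a (s - i) else b (i - s)

lemma pathJoin_of_le {i : ℕ} (hi : i ≤ s) : pathJoin s a b i = a (s - i) := if_pos hi

lemma pathJoin_add (h : a 0 = b 0) (i : ℕ) : pathJoin s a b (s + i) = b i := by
  rcases i.eq_zero_or_pos with rfl | hi
  · simpa [pathJoin] using h
  · rw [pathJoin, if_neg (by omega), Nat.add_sub_cancel_left]

lemma pathJoin_mem {i : ℕ} (hi : i ≤ s + t) :
    pathJoin s a b i ∈ a '' Set.Iic s ∪ b '' Set.Iic t := by
  by_cases his : i ≤ s
  · exact Or.inl ⟨s - i, Nat.sub_le s i, (pathJoin_of_le his).symm⟩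
  · exact Or.inr ⟨i - s, Nat.sub_le_iff_le_add'.2 hi, (if_neg his).symm⟩

lemma pathEdges_union_subset_pathJoin (h : a 0 = b 0) :
    pathEdges s a ∪ pathEdges t b ⊆ pathEdges (s + t) (pathJoin s a b) := by
  refine Finset.union_subset (fun e he => ?_) (fun e he => ?_) <;>
    obtain ⟨i, hi, rfl⟩ := mem_pathEdges.1 he
  · refine mem_pathEdges.2 ⟨s - (i + 1), by omega, ?_⟩
    rw [pathJoin_of_le (by omega), pathJoin_of_le (by omega), Sym2.eq_swap]
    congr <;> omega
  · exact mem_pathEdges.2 ⟨s + i, by omega, by rw [pathJoin_add h, add_assoc, pathJoin_add h]⟩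

lemma IsPathIn.join (ha : IsPathIn G s a) (hb : IsPathIn G t b) (h : a 0 = b 0)
    (hab : ∀ i ∈ Set.Ioc 0 s, ∀ j ∈ Set.Ioc 0 t, a i ≠ b j) :
    IsPathIn G (s + t) (pathJoin s a b) where
  injOn := by
    suffices hne : ∀ i j, i < j → j ≤ s + t → pathJoin s a b i ≠ pathJoin s a b j by
      intro i hi j hj hij
      by_contra hne'
      rcases Nat.lt_or_gt_of_ne hne' with hlt | hlt
      · exact hne i j hlt hj hij
      · exact hne j i hlt hi hij.symm
    intro i j hij hj heq
    by_cases hjs : j ≤ s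
    · rw [pathJoin_of_le (hij.le.trans hjs), pathJoin_of_le hjs] at heq
      have := ha.injOn (Nat.sub_le s i) (Nat.sub_le s j) heq
      omega
    obtain ⟨j, rfl⟩ := Nat.exists_eq_add_of_le (Nat.le_of_not_le hjs)
    rw [pathJoin_add h] at heq
    by_cases his : i < s
    · rw [pathJoin_of_le his.le] at heq
      exact hab (s - i) ⟨by omega, by omega⟩ j ⟨by omega, by omega⟩ heq
    · obtain ⟨i, rfl⟩ := Nat.exists_eq_add_of_le (Nat.le_of_not_lt his)
      rw [pathJoin_add h] at heq
      have := hb.injOn (x₁ := i) (x₂ := j) (by simp only [Set.mem_Iic]; omega)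
        (by simp only [Set.mem_Iic]; omega) heq
      omega
  adj := by
    intro i hi
    by_cases his : i < s
    · rw [pathJoin_of_le his.le, pathJoin_of_le his]
      have := (ha.adj (s - (i + 1)) (by omega)).symm
      rwa [show s - (i + 1) + 1 = s - i by omega] at this
    · obtain ⟨i, rfl⟩ := Nat.exists_eq_add_of_le (Nat.le_of_not_lt his)
      rw [pathJoin_add h, add_assoc, pathJoin_add h]
      exact hb.adj i (by omega)

end Paths

section Cycles

variable {V : Type*} {G H : SimpleGraph V} {c n : ℕ} {p : ℕ → V}

lemma exists_lt_add_modEq (hn : 0 < n) (b x : ℕ) : ∃ y < n, b + y ≡ x [MOD n] := by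
  obtain ⟨m, rfl⟩ := Nat.exists_eq_add_of_le' hn
  refine ⟨(x + b * m) % (m + 1), Nat.mod_lt _ hn, ?_⟩
  calc b + (x + b * m) % (m + 1) ≡ b + (x + b * m) [MOD m + 1] := (Nat.mod_modEq _ _).add_left b
    _ = x + (m + 1) * b := by ring
    _ ≡ x [MOD m + 1] := by simp [Nat.ModEq]

/-- The vertices `p 0, …, p (n - 1)` are pairwise distinct and `p` is periodic with period `n`, so
that `p` runs around an `n`-gon. -/
def IsPolygon (n : ℕ) (p : ℕ → V) : Prop := ∀ i j, p i = p j ↔ i ≡ j [MOD n]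

lemma IsPolygon.injOn (h : IsPolygon n p) (b : ℕ) : Set.InjOn (fun i => p (b + i)) (Set.Iio n) :=
  fun _ hi _ hj hij => (((h _ _).1 hij).add_left_cancel' b).eq_of_lt_of_lt hi hj

lemma IsPolygon.exists_lt (h : IsPolygon n p) (hn : 0 < n) (b x : ℕ) :
    ∃ y < n, p (b + y) = p x ∧ p (b + y + 1) = p (x + 1) := by
  obtain ⟨y, hy, hyx⟩ := exists_lt_add_modEq hn b x
  exact ⟨y, hy, (h _ _).2 hyx, (h _ _).2 (hyx.add_right 1)⟩

lemma IsPolygon.mk_mem_pathEdges (h : IsPolygon n p) (hn : 0 < n) (x : ℕ) :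
    s(p x, p (x + 1)) ∈ pathEdges n p := by
  obtain ⟨y, hy, hyx, hyx'⟩ := h.exists_lt hn 0 x
  rw [zero_add] at hyx hyx'
  exact mem_pathEdges.2 ⟨y, hy, by rw [hyx, hyx']⟩

lemma IsPolygon.pathEdges_subset_insert (h : IsPolygon (n + 1) p) (j : ℕ) :
    pathEdges (n + 1) p ⊆
      insert s(p j, p (j + 1)) (pathEdges n fun i => p (j + 1 + i)) := by
  intro e he
  obtain ⟨x, -, rfl⟩ := mem_pathEdges.1 he
  obtain ⟨y, hy, hyx, hyx'⟩ := h.exists_lt n.succ_pos j x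
  rw [← hyx, ← hyx']
  rcases y with _ | y
  · exact Finset.mem_insert_self _ _
  · refine Finset.mem_insert_of_mem (mem_pathEdges.2 ⟨y, Nat.lt_of_succ_lt_succ hy, ?_⟩)
    ring_nf

/-- The `n`-gon `p` is a cycle in `G`. -/
structure IsCycleIn (G : SimpleGraph V) (n : ℕ) (p : ℕ → V) : Prop where
  isPolygon : IsPolygon n p
  adj : ∀ i, G.Adj (p i) (p (i + 1))

lemma IsCycleIn.isCopy {V : Type} {G : SimpleGraph V} {p : ℕ → V}
    (h : IsCycleIn G (n + 1) p) : IsCopy (cycleGraph (n + 1)) G := by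
  have hinj : Function.Injective fun u : Fin (n + 1) => p u := fun u v huv =>
    Fin.ext (h.isPolygon.injOn 0 u.2 v.2 (by simpa only [zero_add] using huv))
  refine ⟨⟨fun u => p u, hinj⟩, fun u v huv => ?_⟩
  have hadj {u v : Fin (n + 1)} (huv : (v - u).val = 1) : G.Adj (p u) (p v) := by
    have hv : p v = p (u + 1) := by
      rw [h.isPolygon, ← add_sub_cancel u v, Fin.val_add, huv]
      exact Nat.mod_modEq _ _
    exact hv ▸ h.adj u
  rcases cycleGraph_adj'.1 huv with huv | huv
  · exact (hadj huv).symm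
  · exact hadj huv

/-- The polygon `a 0, …, a c, a 0, …` obtained by closing up a path with `c` edges. -/
def closePath (c : ℕ) (a : ℕ → V) (i : ℕ) : V := a (i % (c + 1))

lemma closePath_of_le {a : ℕ → V} {i : ℕ} (hi : i ≤ c) : closePath c a i = a i := by
  rw [closePath, Nat.mod_eq_of_lt (Nat.lt_succ_of_le hi)]

lemma range_closePath (c : ℕ) (a : ℕ → V) : Set.range (closePath c a) = a '' Set.Iic c := by
  apply Set.Subset.antisymm
  · rintro _ ⟨i, rfl⟩
    exact ⟨_, Nat.lt_succ_iff.1 (Nat.mod_lt i c.succ_pos), rfl⟩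
  · rintro _ ⟨i, hi, rfl⟩
    exact ⟨i, closePath_of_le hi⟩

lemma pathEdges_closePath (c : ℕ) (a : ℕ → V) :
    pathEdges (c + 1) (closePath c a) = insert s(a c, a 0) (pathEdges c a) := by
  rw [pathEdges, Finset.range_add_one, Finset.image_insert, closePath_of_le le_rfl, closePath,
    Nat.mod_self]
  congr 1
  refine Finset.image_congr fun i hi => ?_
  have hi : i < c := by simpa using hi
  simp only [closePath_of_le hi.le, closePath_of_le hi]

lemma IsPathIn.isCycleIn_closePath {a : ℕ → V} (h : IsPathIn G c a) (hadj : G.Adj (a c) (a 0)) :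
    IsCycleIn G (c + 1) (closePath c a) where
  isPolygon i j :=
    ⟨fun hij => h.injOn (Nat.lt_succ_iff.1 (Nat.mod_lt i c.succ_pos))
      (Nat.lt_succ_iff.1 (Nat.mod_lt j c.succ_pos)) hij, fun hij => congrArg a hij⟩
  adj i := by
    have hi : i % (c + 1) ≤ c := Nat.lt_succ_iff.1 (Nat.mod_lt i c.succ_pos)
    have hsucc : closePath c a (i + 1) = closePath c a (i % (c + 1) + 1) :=
      congrArg a ((Nat.mod_modEq i (c + 1)).symm.add_right 1)
    rw [hsucc, closePath]
    rcases hi.eq_or_lt with hi | hi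
    · rw [hi, closePath, Nat.mod_self]
      exact hadj
    · rw [closePath_of_le hi]
      exact h.adj _ hi

end Cycles

section Game

variable {V : Type} {r : ℕ} {π : PainterStrategy V r} {l l' : List (Sym2 V)} {c : Fin r} {u v : V}

lemma map_fst_runPainterAux (π : PainterStrategy V r) (h : EdgeHistory V r) (l : List (Sym2 V)) :
    (runPainterAux π h l).map Prod.fst = h.map Prod.fst ++ l := by
  induction l generalizing h with
  | nil => simp only [runPainterAux, List.append_nil]
  | cons e l ih => simp [runPainterAux, ih]

lemma runPainterAux_append (π : PainterStrategy V r) (h : EdgeHistory V r)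
    (l m : List (Sym2 V)) :
    runPainterAux π h (l ++ m) = runPainterAux π (runPainterAux π h l) m := by
  induction l generalizing h with
  | nil => rfl
  | cons e _ ih => exact ih _

lemma isPrefix_runPainterAux (π : PainterStrategy V r) (h : EdgeHistory V r)
    (l : List (Sym2 V)) : h <+: runPainterAux π h l := by
  induction l generalizing h with
  | nil => exact List.prefix_rfl
  | cons e _ ih => exact (List.prefix_append _ _).trans (ih _)

/-- The graph formed by the edges to which the strategy `π` gives color `c` when Builder presents
the edges of `l`. -/
def paintedGraph (π : PainterStrategy V r) (l : List (Sym2 V)) (c : Fin r) : SimpleGraph V :=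
  colorGraph (runPainter π l) c

lemma paintedGraph_mono (h : l <+: l') : paintedGraph π l c ≤ paintedGraph π l' c := by
  obtain ⟨m, rfl⟩ := h
  refine fromEdgeSet_mono fun e he => ?_
  rw [Set.mem_ofPred_eq, runPainter, runPainterAux_append]
  exact (isPrefix_runPainterAux π _ m).subset he

lemma mem_of_paintedGraph_adj (h : (paintedGraph π l c).Adj u v) : s(u, v) ∈ l := by
  have hmem := List.mem_map_of_mem (f := Prod.fst) ((fromEdgeSet_adj _).1 h).1
  rwa [runPainter, map_fst_runPainterAux] at hmem

lemma exists_paintedGraph_adj (π : PainterStrategy V r) (hl : ValidEdgeSeq l) (h : s(u, v) ∈ l) :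
    ∃ c, (paintedGraph π l c).Adj u v := by
  have hmem : s(u, v) ∈ (runPainter π l).map Prod.fst := by
    rwa [runPainter, map_fst_runPainterAux]
  obtain ⟨⟨_, c⟩, hc, rfl⟩ := List.mem_map.1 hmem
  exact ⟨c, (fromEdgeSet_adj _).2 ⟨hc, fun huv => hl.2 _ h (Sym2.mk_isDiag_iff.2 huv)⟩⟩

lemma pathEdges_subset_of_isPathIn {t : ℕ} {a : ℕ → V} (h : IsPathIn (paintedGraph π l c) t a) :
    pathEdges t a ⊆ l.toFinset := by
  intro e he
  obtain ⟨i, hi, rfl⟩ := mem_pathEdges.1 he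
  exact List.mem_toFinset.2 (mem_of_paintedGraph_adj (h.adj i hi))

lemma exists_validEdgeSeq_extension (hl : ValidEdgeSeq l) {X : Finset (Sym2 V)}
    (hX : ∀ e ∈ X, ¬ e.IsDiag) :
    ∃ l', l <+: l' ∧ ValidEdgeSeq l' ∧ l'.toFinset = l.toFinset ∪ X := by
  refine ⟨l ++ (X \ l.toFinset).toList, List.prefix_append _ _, ⟨?_, ?_⟩, ?_⟩
  · refine hl.1.append (Finset.nodup_toList _) fun e he he' => ?_
    exact (Finset.mem_sdiff.1 (Finset.mem_toList.1 he')).2 (List.mem_toFinset.2 he)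
  · intro e he
    rcases List.mem_append.1 he with he | he
    · exact hl.2 e he
    · exact hX e (Finset.mem_sdiff.1 (Finset.mem_toList.1 he)).1
  · rw [List.toFinset_append, Finset.toList_toFinset, Finset.union_sdiff_self_eq_union]

lemma edgesWithin_boardOf_le (l : List (Sym2 V)) (S : Finset V) :
    edgesWithin (boardOf l) S ≤ #(l.toFinset ∩ S.sym2) := by
  rw [edgesWithin, ← Set.ncard_coe_finset]
  refine Set.ncard_le_ncard ?_ (Finset.finite_toSet _)
  rintro e ⟨he, heS⟩
  rw [boardOf, edgeSet_fromEdgeSet] at he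
  exact Finset.mem_inter.2 ⟨List.mem_toFinset.2 he.1, Finset.mem_sym2_iff.2 heS⟩

lemma Chargeable.densityLE_boardOf {k : ℕ} {I : Set V} (h : Chargeable k l.toFinset I)
    (hk : 0 < k) (hl' : l' ⊆ l) : DensityLE (boardOf l') ((k + 1) / k) := by
  intro S _
  have hsub : l'.toFinset ⊆ l.toFinset := fun e he =>
    List.mem_toFinset.2 (hl' (List.mem_toFinset.1 he))
  have hcount : k * edgesWithin (boardOf l') S ≤ (k + 1) * #S :=
    calc k * edgesWithin (boardOf l') S ≤ k * #(l'.toFinset ∩ S.sym2) :=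
          Nat.mul_le_mul_left k (edgesWithin_boardOf_le l' S)
      _ ≤ (k + 1) * #{v ∈ S | v ∈ I} := h.mono hsub subset_rfl S
      _ ≤ (k + 1) * #S := Nat.mul_le_mul_left _ (Finset.card_filter_le _ _)
  rw [div_mul_eq_mul_div, le_div_iff₀ (by exact_mod_cast hk), mul_comm]
  exact_mod_cast hcount

end Game

section Forests

variable {V : Type*} {k : ℕ} {T X : Finset (Sym2 V)}

/-- The edges in `T` form a forest: every nonempty set of vertices spans fewer edges than it has
vertices. -/
def IsForest (T : Finset (Sym2 V)) : Prop :=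
  ∀ S : Finset V, S.Nonempty → #(T ∩ S.sym2) < #S

lemma isForest_empty : IsForest (∅ : Finset (Sym2 V)) := fun S hS => by simpa using hS.card_pos

lemma IsForest.insert_edge (h : IsForest T) {A : Finset V} {x y : V} (hx : x ∈ A) (hy : y ∉ A)
    (hT : ∀ e ∈ T, (∀ v ∈ e, v ∈ A) ∨ ∀ v ∈ e, v ∉ A) : IsForest (insert s(x, y) T) := by
  intro S hS
  by_cases hxy : x ∈ S ∧ y ∈ S
  · have hsub : insert s(x, y) T ∩ S.sym2 ⊆
        insert s(x, y) (T ∩ (S ∩ A).sym2 ∪ T ∩ (S \ A).sym2) := by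
      intro e he
      obtain ⟨he, heS⟩ := Finset.mem_inter.1 he
      rw [Finset.mem_sym2_iff] at heS
      rcases Finset.mem_insert.1 he with rfl | he
      · exact Finset.mem_insert_self _ _
      refine Finset.mem_insert_of_mem (Finset.mem_union.2 ?_)
      simp only [Finset.mem_inter, Finset.mem_sym2_iff, Finset.mem_sdiff]
      exact (hT e he).imp (fun hA => ⟨he, fun v hv => ⟨heS v hv, hA v hv⟩⟩)
        (fun hA => ⟨he, fun v hv => ⟨heS v hv, hA v hv⟩⟩)
    have hinside := h (S ∩ A) ⟨x, Finset.mem_inter.2 ⟨hxy.1, hx⟩⟩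
    have houtside := h (S \ A) ⟨y, Finset.mem_sdiff.2 ⟨hxy.2, hy⟩⟩
    calc #(insert s(x, y) T ∩ S.sym2)
        ≤ #(T ∩ (S ∩ A).sym2 ∪ T ∩ (S \ A).sym2) + 1 :=
          (Finset.card_le_card hsub).trans (Finset.card_insert_le _ _)
      _ ≤ #(T ∩ (S ∩ A).sym2) + #(T ∩ (S \ A).sym2) + 1 := by
          gcongr
          exact Finset.card_union_le _ _
      _ < #(S ∩ A) + #(S \ A) := by omega
      _ = #S := Finset.card_inter_add_card_sdiff S A
  · rw [Finset.insert_inter_of_notMem (by rwa [Finset.mk_mem_sym2_iff])]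
    exact h S hS

/-- For `S` disjoint from `W` the forest bound on `S` suffices; otherwise the bound on `S ∪ W`
leaves room for at most `#(S \ W)` edges in addition to those in `X`. -/
lemma IsForest.chargeable_sdiff (h : IsForest T) {W : Finset V} (hW : W.Nonempty)
    (hX : X ⊆ T ∩ W.sym2) (hcard : #W ≤ #X + 1) {I : Set V} (hI : (↑W)ᶜ ⊆ I) :
    Chargeable k (T \ X) I := by
  refine Chargeable.of_card_le fun S => ?_
  suffices hle : #((T \ X) ∩ S.sym2) ≤ #(S \ W) by
    refine hle.trans (Finset.card_le_card fun v hv => ?_)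
    obtain ⟨hvS, hvW⟩ := Finset.mem_sdiff.1 hv
    exact Finset.mem_filter.2 ⟨hvS, hI hvW⟩
  have hsub : X ∪ (T \ X) ∩ S.sym2 ⊆ T ∩ (S ∪ W).sym2 := by
    refine Finset.union_subset (hX.trans ?_) (Finset.inter_subset_inter Finset.sdiff_subset ?_)
    · exact Finset.inter_subset_inter_left (Finset.sym2_mono Finset.subset_union_right)
    · exact Finset.sym2_mono Finset.subset_union_left
  have hdisj : Disjoint X ((T \ X) ∩ S.sym2) :=
    Finset.disjoint_sdiff.mono_right Finset.inter_subset_left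
  have hedges : #X + #((T \ X) ∩ S.sym2) < #(S \ W) + #W :=
    calc #X + #((T \ X) ∩ S.sym2) = #(X ∪ (T \ X) ∩ S.sym2) :=
          (Finset.card_union_of_disjoint hdisj).symm
      _ ≤ #(T ∩ (S ∪ W).sym2) := Finset.card_le_card hsub
      _ < #(S ∪ W) := h _ (hW.mono Finset.subset_union_right)
      _ = #(S \ W) + #W := (Finset.card_sdiff_add_card S W).symm
  omega

end Forests

section Spiders

variable {V : Type*} {G : SimpleGraph V} {k n s : ℕ} {t u : ℕ → ℕ} {r : V} {M : ℕ → ℕ → V}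

lemma IsPathIn.card_pathEdges {a : ℕ → V} (h : IsPathIn G s a) : #(pathEdges s a) = s := by
  refine (Finset.card_image_of_injOn fun i hi j hj hij => ?_).trans (Finset.card_range s)
  have hi : i < s := by simpa using hi
  have hj : j < s := by simpa using hj
  rcases Sym2.eq_iff.1 hij with ⟨hij, -⟩ | ⟨hij, hij'⟩
  · exact h.injOn hi.le hj.le hij
  · have := h.injOn hi.le hj hij
    have := h.injOn hi hj.le hij'
    omega

/-- The paths `M 0, …, M (n - 1)` of lengths `t 0, …, t (n - 1)` start at `r` and have no other
vertex in common: they are the legs of a subdivided star. -/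
structure IsSpiderIn (G : SimpleGraph V) (n : ℕ) (t : ℕ → ℕ) (r : V) (M : ℕ → ℕ → V) : Prop where
  start : ∀ j < n, M j 0 = r
  isPathIn : ∀ j < n, IsPathIn G (t j) (M j)
  ne : ∀ i < n, ∀ j < n, i ≠ j → ∀ x ∈ Set.Ioc 0 (t i), ∀ y ∈ Set.Ioc 0 (t j), M i x ≠ M j y

lemma IsSpiderIn.mono (h : IsSpiderIn G n t r M) (hut : ∀ j < n, u j ≤ t j) :
    IsSpiderIn G n u r M where
  start := h.start
  isPathIn j hj := (h.isPathIn j hj).mono le_rfl (hut j hj)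
  ne i hi j hj hij x hx y hy := h.ne i hi j hj hij x (Set.Ioc_subset_Ioc_right (hut i hi) hx) y
    (Set.Ioc_subset_Ioc_right (hut j hj) hy)

lemma IsSpiderIn.ne_root (h : IsSpiderIn G n t r M) {j x : ℕ} (hj : j < n)
    (hx : x ∈ Set.Ioc 0 (t j)) : M j x ≠ r := by
  rw [← h.start j hj]
  exact fun hxr => hx.1.ne' ((h.isPathIn j hj).injOn hx.2 (Nat.zero_le _) hxr)

lemma IsSpiderIn.eq_of_eq (h : IsSpiderIn G n t r M) {i j x y : ℕ} (hi : i < n) (hj : j < n)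
    (hx : x ∈ Set.Ioc 0 (t i)) (hy : y ≤ t j) (hxy : M i x = M j y) : i = j ∧ x = y := by
  have hy₀ : 0 < y := by
    refine Nat.pos_of_ne_zero fun hy₀ => h.ne_root hi hx ?_
    rw [hxy, hy₀, h.start j hj]
  have hij : i = j := by
    by_contra hij
    exact h.ne i hi j hj hij x hx y ⟨hy₀, hy⟩ hxy
  subst hij
  exact ⟨rfl, (h.isPathIn i hi).injOn hx.2 hy hxy⟩

/-- The edges of the legs of a spider. -/
noncomputable def spiderEdges (n : ℕ) (t : ℕ → ℕ) (M : ℕ → ℕ → V) : Finset (Sym2 V) :=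
  (Finset.range n).biUnion fun j => pathEdges (t j) (M j)

/-- The vertices of a spider with root `r`. -/
noncomputable def spiderVertices (n : ℕ) (t : ℕ → ℕ) (r : V) (M : ℕ → ℕ → V) : Finset V :=
  insert r ((Finset.range n).biUnion fun j => (Finset.Ioc 0 (t j)).image (M j))

lemma IsSpiderIn.mem_spiderVertices (h : IsSpiderIn G n t r M) {j x : ℕ} (hj : j < n)
    (hx : x ≤ t j) : M j x ∈ spiderVertices n t r M := by
  rcases x.eq_zero_or_pos with rfl | hx₀
  · rw [h.start j hj]
    exact Finset.mem_insert_self _ _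
  · exact Finset.mem_insert_of_mem (Finset.mem_biUnion.2 ⟨j, Finset.mem_range.2 hj,
      Finset.mem_image_of_mem _ (Finset.mem_Ioc.2 ⟨hx₀, hx⟩)⟩)

lemma IsSpiderIn.card_spiderEdges (h : IsSpiderIn G n t r M) :
    #(spiderEdges n t M) = ∑ j ∈ Finset.range n, t j := by
  rw [spiderEdges, Finset.card_biUnion]
  · exact Finset.sum_congr rfl fun j hj => (h.isPathIn j (Finset.mem_range.1 hj)).card_pathEdges
  · refine fun i hi j hj hij => Finset.disjoint_left.2 fun e he he' => hij ?_
    obtain ⟨x, hx, rfl⟩ := mem_pathEdges.1 he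
    obtain ⟨y, hy, hxy⟩ := mem_pathEdges.1 he'
    have hmem : M i (x + 1) ∈ s(M j y, M j (y + 1)) := hxy ▸ Sym2.mem_mk_right _ _
    rcases Sym2.mem_iff.1 hmem with hxy | hxy
    · exact (h.eq_of_eq (Finset.mem_range.1 hi) (Finset.mem_range.1 hj) ⟨x.succ_pos, hx⟩ hy.le
        hxy).1
    · exact (h.eq_of_eq (Finset.mem_range.1 hi) (Finset.mem_range.1 hj) ⟨x.succ_pos, hx⟩ hy hxy).1

lemma card_spiderVertices_le : #(spiderVertices n t r M) ≤ ∑ j ∈ Finset.range n, t j + 1 := by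
  refine (Finset.card_insert_le _ _).trans (Nat.succ_le_succ (Finset.card_biUnion_le.trans ?_))
  refine Finset.sum_le_sum fun j _ => Finset.card_image_le.trans ?_
  rw [Nat.card_Ioc, Nat.sub_zero]

lemma IsSpiderIn.chargeable_sdiff (h : IsSpiderIn G n t r M) {T : Finset (Sym2 V)}
    (hT : IsForest T) (hsub : spiderEdges n t M ⊆ T) :
    Chargeable k (T \ spiderEdges n t M) (↑(spiderVertices n t r M))ᶜ := by
  refine hT.chargeable_sdiff ⟨r, Finset.mem_insert_self _ _⟩ (fun e he => ?_) ?_ subset_rfl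
  · refine Finset.mem_inter.2 ⟨hsub he, ?_⟩
    obtain ⟨j, hj, he⟩ := Finset.mem_biUnion.1 he
    obtain ⟨x, hx, rfl⟩ := mem_pathEdges.1 he
    exact Finset.mk_mem_sym2_iff.2 ⟨h.mem_spiderVertices (Finset.mem_range.1 hj) hx.le,
      h.mem_spiderVertices (Finset.mem_range.1 hj) hx⟩
  · exact card_spiderVertices_le.trans_eq (by rw [h.card_spiderEdges])

end Spiders

section BinomialTrees

variable {V : Type*} {G H : SimpleGraph V} {n m q K : ℕ} {r : V} {A B : Finset V}

/-- `G` contains a binomial tree of order `n` with root `r` and vertices in `A`. Such a tree arises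
from two disjoint binomial trees of order `n - 1` by joining their roots. -/
def HasBinomialTree (G : SimpleGraph V) : ℕ → V → Finset V → Prop
  | 0, r, A => r ∈ A
  | n + 1, r, A => ∃ B C r', B ⊆ A ∧ C ⊆ A ∧ Disjoint B C ∧ G.Adj r r' ∧
      HasBinomialTree G n r B ∧ HasBinomialTree G n r' C

lemma HasBinomialTree.mono (h : HasBinomialTree G n r A) (hG : G ≤ H) (hA : A ⊆ B) :
    HasBinomialTree H n r B := by
  induction n generalizing r A B with
  | zero => exact hA h
  | succ n ih =>
    obtain ⟨C, D, r', hC, hD, hCD, hadj, h₁, h₂⟩ := h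
    exact ⟨C, D, r', hC.trans hA, hD.trans hA, hCD, hG hadj, ih h₁ subset_rfl, ih h₂ subset_rfl⟩

lemma HasBinomialTree.of_le (h : HasBinomialTree G n r A) (hm : m ≤ n) :
    HasBinomialTree G m r A := by
  induction n, hm using Nat.le_induction generalizing r A with
  | base => exact h
  | succ n _ ih =>
    obtain ⟨B, _, _, hB, -, -, -, hrB, -⟩ := h
    exact (ih hrB).mono le_rfl hB

lemma HasBinomialTree.root_mem (h : HasBinomialTree G n r A) : r ∈ A := h.of_le n.zero_le

lemma HasBinomialTree.exists_path (h : HasBinomialTree G n r A) :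
    ∃ a, a 0 = r ∧ IsPathIn G n a ∧ ∀ i ≤ n, a i ∈ A := by
  induction n generalizing r A with
  | zero =>
    refine ⟨fun _ => r, rfl, ⟨?_, fun i hi => absurd hi i.not_lt_zero⟩, fun _ _ => h⟩
    exact fun i hi j hj _ => (Nat.le_zero.1 hi).trans (Nat.le_zero.1 hj).symm
  | succ n ih =>
    obtain ⟨B, C, r', hB, hC, hBC, hadj, hr, hr'⟩ := h
    obtain ⟨b, rfl, hb, hbC⟩ := ih hr'
    refine ⟨pathCons r b, rfl, hb.cons hadj fun i hi hir => ?_, ?_⟩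
    · exact Finset.disjoint_left.1 hBC hr.root_mem (hir ▸ hbC i hi)
    · rintro (_ | i) hi
      · exact hB hr.root_mem
      · exact hC (hbC i (Nat.le_of_succ_le_succ hi))

lemma HasBinomialTree.exists_children (h : HasBinomialTree G (q + K) r A) :
    ∃ (x : ℕ → V) (C : ℕ → Finset V), (Set.Iio K).PairwiseDisjoint C ∧
      ∀ j < K, G.Adj r (x j) ∧ r ∉ C j ∧ C j ⊆ A ∧ HasBinomialTree G q (x j) (C j) := by
  induction K generalizing A with
  | zero => exact ⟨fun _ => r, fun _ => ∅, by simp, fun j hj => absurd hj j.not_lt_zero⟩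
  | succ K ih =>
    obtain ⟨B, D, y, hB, hD, hBD, hadj, hr, hy⟩ := h
    obtain ⟨x, C, hdisj, hxC⟩ := ih hr
    refine ⟨Function.update x K y, Function.update C K D, ?_, fun j hj => ?_⟩
    · intro i hi j hj hij
      rcases (Nat.lt_succ_iff.1 hi).lt_or_eq with hi | rfl <;>
        rcases (Nat.lt_succ_iff.1 hj).lt_or_eq with hj | rfl
      · simpa only [Function.onFun, Function.update_of_ne hi.ne, Function.update_of_ne hj.ne]
          using hdisj hi hj hij
      · simpa only [Function.onFun, Function.update_of_ne hi.ne, Function.update_self]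
          using hBD.mono_left (hxC i hi).2.2.1
      · simpa only [Function.onFun, Function.update_of_ne hj.ne, Function.update_self]
          using (hBD.mono_left (hxC j hj).2.2.1).symm
      · exact absurd rfl hij
    · rcases (Nat.lt_succ_iff.1 hj).lt_or_eq with hj | rfl
      · simp only [Function.update_of_ne hj.ne]
        obtain ⟨hadj', hrC, hCB, hC⟩ := hxC j hj
        exact ⟨hadj', hrC, hCB.trans hB, hC⟩
      · simp only [Function.update_self]
        exact ⟨hadj, Finset.disjoint_left.1 hBD hr.root_mem, hD, hy.of_le (Nat.le_add_right q j)⟩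

lemma HasBinomialTree.exists_isSpiderIn (h : HasBinomialTree G (q + K) r A) :
    ∃ M, IsSpiderIn G K (fun _ => q + 1) r M := by
  obtain ⟨x, C, hdisj, hxC⟩ := h.exists_children
  have hpath (j : ℕ) : ∃ a, j < K → a 0 = x j ∧ IsPathIn G q a ∧ ∀ i ≤ q, a i ∈ C j := by
    by_cases hj : j < K
    · obtain ⟨a, ha⟩ := (hxC j hj).2.2.2.exists_path
      exact ⟨a, fun _ => ha⟩
    · exact ⟨fun _ => r, fun hj' => absurd hj' hj⟩
  choose a ha using hpath
  refine ⟨fun j => pathCons r (a j), fun _ _ => rfl, fun j hj => ?_, fun i hi j hj hij => ?_⟩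
  · obtain ⟨hstart, hpath, haC⟩ := ha j hj
    refine hpath.cons (hstart ▸ (hxC j hj).1) fun x hx hxr => ?_
    exact (hxC j hj).2.1 (hxr ▸ haC x hx)
  · rintro (_ | x) hx (_ | y) hy hxy
    · exact hx.1.ne rfl
    · exact hx.1.ne rfl
    · exact hy.1.ne rfl
    · exact Finset.disjoint_left.1 (hdisj hi hj hij)
        ((ha i hi).2.2 x (Nat.le_of_succ_le_succ hx.2))
        ((congrArg (· ∈ C j) hxy).mpr ((ha j hj).2.2 y (Nat.le_of_succ_le_succ hy.2)))

lemma HasBinomialTree.join {ι : Type*} {G : ι → SimpleGraph V} {d d' : ι → ℕ} {x y : V}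
    (hx : ∀ c, HasBinomialTree (G c) (d c) x A) (hy : ∀ c, HasBinomialTree (G c) (d' c) y B)
    (hAB : Disjoint A B) {c : ι} (hadj : (G c).Adj x y) (hdd' : d c ≤ d' c) :
    ∀ i, HasBinomialTree (G i) ((d + Pi.single c 1 : ι → ℕ) i) x (A ∪ B) := by
  intro i
  rcases eq_or_ne i c with rfl | hi
  · rw [Pi.add_apply, Pi.single_eq_same]
    exact ⟨A, B, y, Finset.subset_union_left, Finset.subset_union_right, hAB, hadj, hx i,
      (hy i).of_le hdd'⟩
  · rw [Pi.add_apply, Pi.single_eq_of_ne hi, add_zero]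
    exact (hx i).mono le_rfl Finset.subset_union_left

/-- Whatever the color of the edge joining the roots, one of the two roots has the smaller tree in
this color, and this tree grows. -/
lemma exists_binomialTrees_union {ι : Type*} [Fintype ι] {G : ι → SimpleGraph V} {d d' : ι → ℕ}
    {x y : V} (hx : ∀ c, HasBinomialTree (G c) (d c) x A)
    (hy : ∀ c, HasBinomialTree (G c) (d' c) y B) (hAB : Disjoint A B) {c : ι}
    (hadj : (G c).Adj x y) (hd : n ≤ ∑ c, d c) (hd' : n ≤ ∑ c, d' c) :
    ∃ z ∈ A ∪ B, ∃ e : ι → ℕ, n + 1 ≤ ∑ c, e c ∧ ∀ c, HasBinomialTree (G c) (e c) z (A ∪ B) := by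
  have hsum (d : ι → ℕ) : ∑ i, (d + Pi.single c 1 : ι → ℕ) i = ∑ i, d i + 1 := by
    simp [Finset.sum_add_distrib]
  rcases le_total (d c) (d' c) with hle | hle
  · exact ⟨x, Finset.mem_union_left B (hx c).root_mem, d + Pi.single c 1,
      by rw [hsum]; gcongr, HasBinomialTree.join hx hy hAB hadj hle⟩
  · refine ⟨y, Finset.mem_union_right A (hy c).root_mem, d' + Pi.single c 1,
      by rw [hsum]; gcongr, ?_⟩
    rw [Finset.union_comm]
    exact HasBinomialTree.join hy hx hAB.symm hadj.symm hle

end BinomialTrees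

section BuildingTrees

variable {V : Type} {r n : ℕ} {A B C : Finset V} {l l₁ l₂ : List (Sym2 V)}

/-- The edge sequence `l'` continues `l` with edges inside `A`, and the resulting board is a
forest. -/
structure IsForestExtension (A : Finset V) (l l' : List (Sym2 V)) : Prop where
  isPrefix : l <+: l'
  valid : ValidEdgeSeq l'
  isForest : IsForest l'.toFinset
  mem_or : ∀ e ∈ l', e ∈ l ∨ ∀ v ∈ e, v ∈ A

lemma IsForestExtension.exists_join (h₁ : IsForestExtension B l l₁)
    (h₂ : IsForestExtension C l₁ l₂) (hBC : Disjoint B C) (hl : ∀ e ∈ l, ∀ v ∈ e, v ∉ B) {x y : V}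
    (hx : x ∈ B) (hy : y ∈ C) :
    ∃ l₃, IsForestExtension (B ∪ C) l l₃ ∧ l₂ <+: l₃ ∧ s(x, y) ∈ l₃ := by
  have hyB : y ∉ B := Finset.disjoint_right.1 hBC hy
  obtain ⟨l₃, hl₂₃, hl₃, hl₃eq⟩ := exists_validEdgeSeq_extension h₂.valid (X := {s(x, y)})
    fun e he hdiag => hyB (Sym2.mk_isDiag_iff.1 (Finset.mem_singleton.1 he ▸ hdiag) ▸ hx)
  rw [Finset.union_singleton] at hl₃eq
  have hmem (e : Sym2 V) : e ∈ l₃ ↔ e = s(x, y) ∨ e ∈ l₂ := by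
    rw [← List.mem_toFinset, hl₃eq, Finset.mem_insert, List.mem_toFinset]
  refine ⟨l₃, ⟨(h₁.isPrefix.trans h₂.isPrefix).trans hl₂₃, hl₃, ?_, fun e he => ?_⟩, hl₂₃,
    (hmem _).2 (Or.inl rfl)⟩
  · refine hl₃eq ▸ h₂.isForest.insert_edge hx hyB fun e he => ?_
    rcases h₂.mem_or e (List.mem_toFinset.1 he) with he | he
    · exact (h₁.mem_or e he).symm.imp_right (hl e)
    · exact Or.inr fun v hv => Finset.disjoint_right.1 hBC (he v hv)
  · rcases (hmem e).1 he with rfl | he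
    · exact Or.inr (Sym2.ball.2 ⟨Finset.mem_union_left C hx, Finset.mem_union_right B hy⟩)
    rcases h₂.mem_or e he with he | he
    · exact (h₁.mem_or e he).imp_right fun h v hv => Finset.mem_union_left C (h v hv)
    · exact Or.inr fun v hv => Finset.mem_union_right B (he v hv)

lemma exists_binomialTrees (π : PainterStrategy V r) (hA : 2 ^ n ≤ #A) (hl : ValidEdgeSeq l)
    (hforest : IsForest l.toFinset) (hlA : ∀ e ∈ l, ∀ v ∈ e, v ∉ A) :
    ∃ l', IsForestExtension A l l' ∧ ∃ x ∈ A, ∃ d : Fin r → ℕ,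
      n ≤ ∑ c, d c ∧ ∀ c, HasBinomialTree (paintedGraph π l' c) (d c) x A := by
  induction n generalizing A l with
  | zero =>
    obtain ⟨x, hx⟩ := Finset.card_pos.1 hA
    exact ⟨l, ⟨List.prefix_rfl, hl, hforest, fun _ => Or.inl⟩, x, hx, fun _ => 0,
      Nat.zero_le _, fun _ => hx⟩
  | succ n ih =>
    rw [pow_succ, mul_two] at hA
    obtain ⟨B, hBA, hB⟩ := Finset.exists_subset_card_eq (le_of_add_le_left hA)
    have hC : 2 ^ n ≤ #(A \ B) := by
      rw [Finset.card_sdiff_of_subset hBA, hB]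
      exact Nat.le_sub_of_add_le hA
    have hlB : ∀ e ∈ l, ∀ v ∈ e, v ∉ B := fun e he v hv hvB => hlA e he v hv (hBA hvB)
    obtain ⟨l₁, h₁, x, hxB, d, hd, hx⟩ := ih hB.ge hl hforest hlB
    have hl₁C : ∀ e ∈ l₁, ∀ v ∈ e, v ∉ A \ B := fun e he v hv hvC =>
      (h₁.mem_or e he).elim (fun he => hlA e he v hv (Finset.mem_sdiff.1 hvC).1)
        fun he => (Finset.mem_sdiff.1 hvC).2 (he v hv)
    obtain ⟨l₂, h₂, y, hyC, d', hd', hy⟩ := ih hC h₁.valid h₁.isForest hl₁C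
    obtain ⟨l₃, h₃, hl₂₃, hxy⟩ := h₁.exists_join h₂ Finset.disjoint_sdiff hlB hxB hyC
    obtain ⟨c, hc⟩ := exists_paintedGraph_adj π h₃.valid hxy
    have hunion := exists_binomialTrees_union
      (fun c => (hx c).mono (paintedGraph_mono (h₂.isPrefix.trans hl₂₃)) subset_rfl)
      (fun c => (hy c).mono (paintedGraph_mono hl₂₃) subset_rfl) Finset.disjoint_sdiff hc hd hd'
    rw [Finset.union_sdiff_of_subset hBA] at h₃ hunion
    exact ⟨l₃, h₃, hunion⟩

end BuildingTrees

section Polygons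

variable {V : Type} {G H : SimpleGraph V} {k c n r : ℕ} {z : ℕ → V} {P : ℕ → ℕ → V}

/-- Builder can force a monochromatic cycle of length `n` such that the rest of the board can be
paid for without using the vertices of the cycle. -/
def CanForceFreeCycle (π : PainterStrategy V r) (k n : ℕ) : Prop :=
  ∃ l, ValidEdgeSeq l ∧ ∃ c p, IsCycleIn (paintedGraph π l c) n p ∧
    Chargeable k (l.toFinset \ pathEdges n p) (Set.range p)ᶜ

/-- The path `P j` leads from the vertex `z j` of the `n`-gon `z` to the next vertex `z (j + 1)`,
and it has `c` edges, all of them in `G`. -/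
structure IsPolygonOfPaths (G : SimpleGraph V) (n c : ℕ) (z : ℕ → V) (P : ℕ → ℕ → V) : Prop where
  isPolygon : IsPolygon n z
  isPathIn : ∀ j < n, IsPathIn G c (P j)
  start_eq : ∀ j < n, P j 0 = z j
  end_eq : ∀ j < n, P j c = z (j + 1)

lemma IsPolygonOfPaths.mono (h : IsPolygonOfPaths G n c z P) (hG : G ≤ H) :
    IsPolygonOfPaths H n c z P :=
  { h with isPathIn := fun j hj => (h.isPathIn j hj).mono hG le_rfl }

lemma IsPolygon.not_isDiag (hz : IsPolygon n z) (hn : 2 ≤ n) {e : Sym2 V}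
    (he : e ∈ pathEdges n z) : ¬ e.IsDiag := by
  obtain ⟨i, -, rfl⟩ := mem_pathEdges.1 he
  intro hdiag
  have : 0 = 1 := hz.injOn i (Nat.zero_lt_of_lt hn) hn (Sym2.mk_isDiag_iff.1 hdiag)
  omega

/-- If one of the edges of the polygon gets the color of the paths, then it closes a path. -/
lemma IsPolygonOfPaths.isCycleIn_or {π : PainterStrategy V 2} {l : List (Sym2 V)} {χ : Fin 2}
    (h : IsPolygonOfPaths (paintedGraph π l χ) n c z P) (hn : 0 < n) (hl : ValidEdgeSeq l)
    (hz : pathEdges n z ⊆ l.toFinset) :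
    (∃ j < n, IsCycleIn (paintedGraph π l χ) (c + 1) (closePath c (P j))) ∨
      ∃ χ', IsCycleIn (paintedGraph π l χ') n z := by
  by_cases hχ : ∃ j < n, (paintedGraph π l χ).Adj (z j) (z (j + 1))
  · obtain ⟨j, hj, hadj⟩ := hχ
    rw [← h.start_eq j hj, ← h.end_eq j hj] at hadj
    exact Or.inl ⟨j, hj, (h.isPathIn j hj).isCycleIn_closePath hadj.symm⟩
  · push Not at hχ
    refine Or.inr ⟨1 - χ, h.isPolygon, fun i => ?_⟩
    obtain ⟨j, hj, hji, hji'⟩ := h.isPolygon.exists_lt hn 0 i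
    rw [zero_add] at hji hji'
    rw [← hji, ← hji']
    obtain ⟨χ', hadj⟩ := exists_paintedGraph_adj π hl
      (List.mem_toFinset.1 (hz (h.isPolygon.mk_mem_pathEdges hn j)))
    have hne : χ' ≠ χ := fun hχ' => hχ j hj (hχ' ▸ hadj)
    rwa [show 1 - χ = χ' by omega]

/-- After closing the path `P j`, the other edges of the polygon form an ear. -/
lemma IsPolygonOfPaths.chargeable_sdiff_closePath (h : IsPolygonOfPaths G n c z P)
    (hn : k + 2 ≤ n) (hinner : ∀ j < n, ∀ x ∈ Set.Ioo 0 c, P j x ∉ Set.range z)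
    {X : Finset (Sym2 V)} {j : ℕ} (hj : j < n)
    (hX : Chargeable k (X \ pathEdges c (P j)) (Set.range z ∪ P j '' Set.Iic c)ᶜ) :
    Chargeable k ((X ∪ pathEdges n z) \ pathEdges (c + 1) (closePath c (P j)))
      (Set.range (closePath c (P j)))ᶜ := by
  obtain ⟨m, rfl⟩ := Nat.exists_eq_add_of_le' (Nat.one_le_of_lt hj)
  have hinj := h.isPolygon.injOn (j + 1)
  have hear : Chargeable k (pathEdges m fun i => z (j + 1 + i))
      ((fun i => z (j + 1 + i)) '' Set.Ioo 0 m) :=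
    chargeable_pathEdges (by omega) (hinj.mono fun i hi => hi.2.trans m.lt_succ_self)
  refine (hX.union hear ?_).mono ?_ ?_
  · refine Set.disjoint_right.2 ?_
    rintro _ ⟨i, -, rfl⟩ hi
    exact hi (Or.inl ⟨_, rfl⟩)
  · rw [pathEdges_closePath, h.start_eq j hj, h.end_eq j hj, Sym2.eq_swap]
    intro e he
    have := fun he => h.isPolygon.pathEdges_subset_insert j (show e ∈ _ from he)
    simp only [Finset.mem_union, Finset.mem_sdiff, Finset.mem_insert] at he this ⊢
    tauto
  · rw [range_closePath]
    refine Set.union_subset (Set.compl_subset_compl.2 Set.subset_union_right) ?_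
    rintro _ ⟨i, hi, rfl⟩ ⟨x, hx, hxi⟩
    rcases x.eq_zero_or_pos with rfl | hx₀
    · have hperiod : z j = z (j + 1 + m) :=
        (h.isPolygon _ _).2 (by rw [add_right_comm, add_assoc]; simp [Nat.ModEq])
      rw [h.start_eq j hj, hperiod] at hxi
      exact hi.2.ne' (hinj m.lt_succ_self (hi.2.trans m.lt_succ_self) hxi)
    rcases (Set.mem_Iic.1 hx).eq_or_lt with rfl | hxc
    · rw [h.end_eq j hj] at hxi
      exact hi.1.ne (hinj m.succ_pos (hi.2.trans m.lt_succ_self) hxi)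
    · exact hinner j hj x ⟨hx₀, hxc⟩ ⟨_, hxi.symm⟩

lemma IsPolygonOfPaths.canForceFreeCycle {π : PainterStrategy V 2} {l : List (Sym2 V)} {χ : Fin 2}
    (h : IsPolygonOfPaths (paintedGraph π l χ) n c z P) (hc : k + 1 ≤ c) (hn : k + 2 ≤ n)
    (hl : ValidEdgeSeq l) (hinner : ∀ j < n, ∀ x ∈ Set.Ioo 0 c, P j x ∉ Set.range z)
    (hrest : ∀ j < n, Chargeable k (l.toFinset \ pathEdges c (P j))
      (Set.range z ∪ P j '' Set.Iic c)ᶜ) :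
    CanForceFreeCycle π k (c + 1) ∨ CanForceFreeCycle π k n := by
  obtain ⟨l', hll', hl', hl'eq⟩ := exists_validEdgeSeq_extension hl (X := pathEdges n z)
    fun _ => h.isPolygon.not_isDiag (by omega)
  have h' := h.mono (paintedGraph_mono hll')
  rcases h'.isCycleIn_or (by omega) hl' (hl'eq ▸ Finset.subset_union_right) with
    ⟨j, hj, hcycle⟩ | ⟨χ', hcycle⟩
  · refine Or.inl ⟨l', hl', χ, _, hcycle, ?_⟩
    rw [hl'eq]
    exact h.chargeable_sdiff_closePath hn hinner hj (hrest j hj)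
  · refine Or.inr ⟨l', hl', χ', z, hcycle, ?_⟩
    have hpath : IsPathIn (paintedGraph π l χ) c (P 0) := h.isPathIn 0 (by omega)
    have hear := chargeable_pathEdges hc (hpath.injOn.mono fun x hx => hx.2.le)
    refine ((hrest 0 (by omega)).union hear ?_).mono ?_ ?_
    · refine Set.disjoint_right.2 ?_
      rintro _ ⟨x, hx, rfl⟩ hx'
      exact hx' (Or.inr ⟨x, hx.2.le, rfl⟩)
    · rw [hl'eq, Finset.union_sdiff_right, Finset.sdiff_union_self_eq_union]
      exact Finset.sdiff_subset.trans Finset.subset_union_left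
    · refine Set.union_subset (Set.compl_subset_compl.2 Set.subset_union_left) ?_
      rintro _ ⟨x, hx, rfl⟩
      exact hinner 0 (by omega) x hx

end Polygons

section PolygonArcs

variable {V : Type} {G : SimpleGraph V} {k c n : ℕ} {p : ℕ → V} {X : Finset (Sym2 V)}

lemma IsPolygon.arc_inj (h : IsPolygon (c * n) p) {i j x y : ℕ} (hi : i < n) (hj : j < n)
    (hx : x < c) (hy : y < c) (hxy : p (c * i + x) = p (c * j + y)) : i = j ∧ x = y := by
  have hlt {i x : ℕ} (hi : i < n) (hx : x < c) : c * i + x < c * n := by nlinarith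
  have heq : c * i + x = c * j + y := ((h _ _).1 hxy).eq_of_lt_of_lt (hlt hi hx) (hlt hj hy)
  have hij := congrArg (· / c) heq
  simp only [Nat.mul_add_div (Nat.zero_lt_of_lt hx), Nat.div_eq_of_lt hx, Nat.div_eq_of_lt hy,
    add_zero] at hij
  exact ⟨hij, by rwa [hij, add_right_inj] at heq⟩

lemma IsPolygon.arc_notMem_range (h : IsPolygon (c * n) p) (j : ℕ) {x : ℕ}
    (hx : x ∈ Set.Ioo 0 c) : p (c * j + x) ∉ Set.range fun i => p (c * i) := by
  rintro ⟨i, hi⟩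
  have hmod : c * i ≡ c * j + x [MOD c] := ((h _ _).1 hi).of_mul_right n
  rw [Nat.ModEq, Nat.mul_mod_right, Nat.mul_add_mod, Nat.mod_eq_of_lt hx.2] at hmod
  exact hx.1.ne hmod

lemma pathEdges_mul_subset (hc : 0 < c) :
    pathEdges (c * n) p ⊆ (Finset.range n).biUnion fun j => pathEdges c fun i => p (c * j + i) := by
  intro e he
  obtain ⟨i, hi, rfl⟩ := mem_pathEdges.1 he
  refine Finset.mem_biUnion.2 ⟨i / c, Finset.mem_range.2 (Nat.div_lt_of_lt_mul hi), ?_⟩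
  refine mem_pathEdges.2 ⟨i % c, Nat.mod_lt i hc, ?_⟩
  rw [← add_assoc, Nat.div_add_mod]

lemma IsCycleIn.isPolygonOfPaths_arc (h : IsCycleIn G (c * n) p) (hc : 0 < c) (hn : 2 ≤ n) :
    IsPolygonOfPaths G n c (fun j => p (c * j)) fun j i => p (c * j + i) where
  isPolygon i j := by rw [h.isPolygon, Nat.ModEq.mul_left_cancel_iff' hc.ne']
  isPathIn j _ := ⟨(h.isPolygon.injOn _).mono fun i hi => by
    simp only [Set.mem_Iic, Set.mem_Iio] at hi ⊢; nlinarith, fun i _ => h.adj _⟩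
  start_eq _ _ := rfl
  end_eq _ _ := rfl

lemma IsPolygon.chargeable_sdiff_arc (h : IsPolygon (c * n) p) (hc : k + 1 ≤ c)
    (hX : Chargeable k (X \ pathEdges (c * n) p) (Set.range p)ᶜ) {j : ℕ} (hj : j < n) :
    Chargeable k (X \ pathEdges c fun i => p (c * j + i))
      ((Set.range fun i => p (c * i)) ∪ (fun i => p (c * j + i)) '' Set.Iic c)ᶜ := by
  refine Chargeable.of_ears (s := (Finset.range n).erase j) (t := fun _ => c)
    (a := fun i x => p (c * i + x)) (I := (Set.range p)ᶜ) (fun _ _ => hc) ?_ ?_ ?_ ?_ ?_ ?_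
  · intro i hi x hx y hy hxy
    have hin := Finset.mem_range.1 (Finset.mem_of_mem_erase hi)
    exact (h.arc_inj hin hin hx.2 hy.2 hxy).2
  · refine fun i hi i' hi' hne => Set.disjoint_left.2 ?_
    rintro _ ⟨x, hx, rfl⟩ ⟨y, hy, hxy⟩
    exact hne (h.arc_inj (Finset.mem_range.1 (Finset.mem_of_mem_erase hi'))
      (Finset.mem_range.1 (Finset.mem_of_mem_erase hi)) hy.2 hx.2 hxy).1.symm
  · refine hX.mono (fun e he => ?_) subset_rfl
    simp only [Finset.mem_sdiff, Finset.mem_biUnion, Finset.mem_erase, not_exists, not_and] at he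
    refine Finset.mem_sdiff.2 ⟨he.1.1, fun hep => ?_⟩
    obtain ⟨i, hi, hei⟩ := Finset.mem_biUnion.1 (pathEdges_mul_subset (by omega) hep)
    rcases eq_or_ne i j with rfl | hij
    · exact he.1.2 hei
    · exact he.2 i ⟨hij, hi⟩ hei
  · exact fun _ _ _ _ hmem => hmem ⟨_, rfl⟩
  · rintro i hi x hx (hmem | ⟨y, hy, hxy⟩)
    · exact h.arc_notMem_range i hx hmem
    rcases (Set.mem_Iic.1 hy).eq_or_lt with rfl | hyc
    · exact h.arc_notMem_range i hx ⟨j + 1, hxy⟩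
    · exact Finset.ne_of_mem_erase hi (h.arc_inj hj
        (Finset.mem_range.1 (Finset.mem_of_mem_erase hi)) hyc hx.2 hxy).1.symm
  · refine Set.compl_subset_compl.2 (Set.union_subset ?_ ?_)
    · rintro _ ⟨i, rfl⟩
      exact ⟨_, rfl⟩
    · rintro _ ⟨i, -, rfl⟩
      exact ⟨_, rfl⟩

lemma CanForceFreeCycle.of_mul {π : PainterStrategy V 2} (h : CanForceFreeCycle π k (c * n))
    (hc : k + 1 ≤ c) (hn : k + 2 ≤ n) :
    CanForceFreeCycle π k (c + 1) ∨ CanForceFreeCycle π k n := by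
  obtain ⟨l, hl, χ, p, hp, hX⟩ := h
  exact (hp.isPolygonOfPaths_arc (by omega) (by omega)).canForceFreeCycle hc hn hl
    (fun j _ _ hx => hp.isPolygon.arc_notMem_range j hx)
    fun j hj => hp.isPolygon.chargeable_sdiff_arc hc hX hj

/-- Together with the edge joining its endpoints, each arc of length `k` is a closed ear of
length `k + 1`. -/
lemma IsPolygon.chargeable_union_pathEdges (h : IsPolygon (k * (k + 1)) p) (hk : 0 < k)
    (hX : Chargeable k (X \ pathEdges (k * (k + 1)) p) (Set.range p)ᶜ) :
    Chargeable k (X ∪ pathEdges (k + 1) fun j => p (k * j)) Set.univ := by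
  let ear (j : ℕ) : ℕ → V := pathCons (p (k * (j + 1))) fun i => p (k * j + i)
  have hear (j : ℕ) : pathEdges (k + 1) (ear j) =
      insert s(p (k * (j + 1)), p (k * j)) (pathEdges k fun i => p (k * j + i)) :=
    pathEdges_pathCons _ _ _
  have hinj {i j x y : ℕ} (hi : i < k + 1) (hj : j < k + 1) (hx : x ∈ Set.Ioo 0 (k + 1))
      (hy : y ∈ Set.Ioo 0 (k + 1)) (hxy : ear i x = ear j y) : i = j ∧ x = y := by
    obtain ⟨x, rfl⟩ := Nat.exists_eq_add_of_le' hx.1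
    obtain ⟨y, rfl⟩ := Nat.exists_eq_add_of_le' hy.1
    have hxy' := h.arc_inj hi hj (Nat.lt_of_succ_lt_succ hx.2) (Nat.lt_of_succ_lt_succ hy.2) hxy
    exact hxy'.imp_right (congrArg (· + 1))
  refine Chargeable.of_ears (s := Finset.range (k + 1)) (t := fun _ => k + 1) (a := ear)
    (fun _ _ => le_rfl) ?_ ?_ (hX.mono (fun e he => ?_) subset_rfl) ?_
    (fun _ _ _ _ => Set.mem_univ _) (Set.subset_univ _)
  · intro i hi x hx y hy hxy
    exact (hinj (Finset.mem_range.1 hi) (Finset.mem_range.1 hi) hx hy hxy).2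
  · refine fun i hi j hj hij => Set.disjoint_left.2 ?_
    rintro _ ⟨x, hx, rfl⟩ ⟨y, hy, hxy⟩
    exact hij (hinj (Finset.mem_range.1 hj) (Finset.mem_range.1 hi) hy hx hxy).1.symm
  · obtain ⟨he, hne⟩ := Finset.mem_sdiff.1 he
    simp only [Finset.mem_biUnion, hear, Finset.mem_insert, not_exists, not_and, not_or] at hne
    refine Finset.mem_sdiff.2 ⟨(Finset.mem_union.1 he).resolve_right fun hez => ?_, fun hep => ?_⟩
    · obtain ⟨j, hj, rfl⟩ := mem_pathEdges.1 hez
      exact (hne j (Finset.mem_range.2 hj)).1 Sym2.eq_swap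
    · obtain ⟨j, hj, hej⟩ := Finset.mem_biUnion.1 (pathEdges_mul_subset hk hep)
      exact (hne j hj).2 hej
  · rintro i - (_ | x) hx hmem
    · exact hx.1.ne rfl
    · exact hmem ⟨_, rfl⟩

lemma CanForceFreeCycle.exists_isCycleIn {π : PainterStrategy V 2}
    (h : CanForceFreeCycle π k (k * (k + 1))) (hk : 0 < k) :
    ∃ l, ValidEdgeSeq l ∧ Chargeable k l.toFinset Set.univ ∧
      ∃ χ p, IsCycleIn (paintedGraph π l χ) (k + 1) p := by
  obtain ⟨l, hl, χ, p, hp, hX⟩ := h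
  have hsides := hp.isPolygonOfPaths_arc hk (by omega)
  obtain ⟨l', hll', hl', hl'eq⟩ := exists_validEdgeSeq_extension hl
    fun _ => hsides.isPolygon.not_isDiag (by omega)
  refine ⟨l', hl', hl'eq ▸ hp.isPolygon.chargeable_union_pathEdges hk hX, ?_⟩
  rcases (hsides.mono (paintedGraph_mono hll')).isCycleIn_or (by omega) hl'
    (hl'eq ▸ Finset.subset_union_right) with ⟨j, -, hcycle⟩ | ⟨χ', hcycle⟩
  · exact ⟨χ, _, hcycle⟩
  · exact ⟨χ', _, hcycle⟩

end PolygonArcs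

section SpiderPolygons

variable {V : Type} {G : SimpleGraph V} {k c n : ℕ} {t : ℕ → ℕ} {r : V} {M : ℕ → ℕ → V}
  {X : Finset (Sym2 V)}

/-- The ends of the legs of a spider in cyclic order; they will be the corners of an `n`-gon. -/
def spiderTip (n : ℕ) (t : ℕ → ℕ) (M : ℕ → ℕ → V) (j : ℕ) : V := M (j % n) (t (j % n))

/-- The path from the end of the leg `j` of a spider through its root to the end of the next
leg. -/
def spiderSide (n : ℕ) (t : ℕ → ℕ) (M : ℕ → ℕ → V) (j : ℕ) : ℕ → V :=
  pathJoin (t j) (M j) (M ((j + 1) % n))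

lemma add_one_mod_ne (hn : 2 ≤ n) {j : ℕ} (hj : j < n) : j ≠ (j + 1) % n := by
  rcases (Nat.succ_le_of_lt hj).eq_or_lt with rfl | hj
  · rw [Nat.mod_self]
    omega
  · rw [Nat.mod_eq_of_lt hj]
    exact j.succ_ne_self.symm

lemma IsSpiderIn.isPolygonOfPaths (h : IsSpiderIn G n t r M) (hn : 2 ≤ n)
    (ht : ∀ j < n, 0 < t j) (hsum : ∀ j < n, t j + t ((j + 1) % n) = c) :
    IsPolygonOfPaths G n c (spiderTip n t M) (spiderSide n t M) := by
  have hmod (j : ℕ) : j % n < n := Nat.mod_lt j (by omega)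
  have hstart {j : ℕ} (hj : j < n) : M j 0 = M ((j + 1) % n) 0 := by
    rw [h.start j hj, h.start _ (hmod _)]
  refine ⟨fun i j => ⟨fun hij => ?_, fun hij => ?_⟩, fun j hj => ?_, fun j hj => ?_, fun j hj => ?_⟩
  · exact (h.eq_of_eq (hmod i) (hmod j) ⟨ht _ (hmod i), le_rfl⟩ le_rfl hij).1
  · rw [spiderTip, hij, spiderTip]
  · rw [← hsum j hj]
    exact (h.isPathIn j hj).join (h.isPathIn _ (hmod _)) (hstart hj)
      (h.ne j hj _ (hmod _) (add_one_mod_ne hn hj))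
  · rw [spiderSide, pathJoin_of_le (Nat.zero_le _), spiderTip, Nat.mod_eq_of_lt hj, Nat.sub_zero]
  · rw [← hsum j hj, spiderSide, pathJoin_add (hstart hj), spiderTip]

lemma IsSpiderIn.notMem_range_spiderTip (h : IsSpiderIn G n t r M) (ht : ∀ j < n, 0 < t j) {j x : ℕ}
    (hj : j < n) (hx : x < t j) : M j x ∉ Set.range (spiderTip n t M) := by
  rintro ⟨i, hi⟩
  have hin : i % n < n := Nat.mod_lt i (Nat.zero_lt_of_lt hj)
  obtain ⟨hij, hxt⟩ := h.eq_of_eq hin hj ⟨ht _ hin, le_rfl⟩ hx.le hi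
  rw [hij] at hxt
  exact hx.ne' hxt

lemma IsSpiderIn.spiderSide_notMem_range (h : IsSpiderIn G n t r M) (ht : ∀ j < n, 0 < t j)
    {j x : ℕ} (hj : j < n) (hx : x ∈ Set.Ioo 0 (t j + t ((j + 1) % n))) :
    spiderSide n t M j x ∉ Set.range (spiderTip n t M) := by
  obtain ⟨hx₀, hx⟩ := hx
  rw [spiderSide, pathJoin]
  split_ifs with hxj
  · exact h.notMem_range_spiderTip ht hj (by omega)
  · exact h.notMem_range_spiderTip ht (Nat.mod_lt _ (Nat.zero_lt_of_lt hj)) (by omega)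

lemma exists_spiderSide_eq {j x : ℕ} (hx : x ≤ t j + t ((j + 1) % n)) :
    ∃ i ∈ ({j, (j + 1) % n} : Finset ℕ), ∃ y ≤ t i, M i y = spiderSide n t M j x := by
  rcases pathJoin_mem (a := M j) (b := M ((j + 1) % n)) hx with ⟨y, hy, hxy⟩ | ⟨y, hy, hxy⟩
  · exact ⟨j, Finset.mem_insert_self _ _, y, hy, hxy⟩
  · exact ⟨_, Finset.mem_insert_of_mem (Finset.mem_singleton_self _), y, hy, hxy⟩

lemma IsSpiderIn.pathEdges_subset_spiderSide (h : IsSpiderIn G n t r M) {i j : ℕ} (hj : j < n)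
    (hi : i ∈ ({j, (j + 1) % n} : Finset ℕ)) :
    pathEdges (t i) (M i) ⊆ pathEdges (t j + t ((j + 1) % n)) (spiderSide n t M j) := by
  have hnext : (j + 1) % n < n := Nat.mod_lt _ (Nat.zero_lt_of_lt hj)
  have hunion := Finset.union_subset_iff.1 (pathEdges_union_subset_pathJoin (s := t j)
    (t := t ((j + 1) % n)) ((h.start j hj).trans (h.start _ hnext).symm))
  rcases Finset.mem_insert.1 hi with rfl | hi
  · exact hunion.1
  · rw [Finset.mem_singleton.1 hi]
    exact hunion.2

/-- The legs that are not part of the side `j` are ears. -/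
lemma IsSpiderIn.chargeable_sdiff_spiderSide (h : IsSpiderIn G n t r M)
    (ht : ∀ j < n, k + 1 ≤ t j)
    (hX : Chargeable k (X \ spiderEdges n t M) (↑(spiderVertices n t r M))ᶜ) {j : ℕ}
    (hj : j < n) (hsum : t j + t ((j + 1) % n) = c) :
    Chargeable k (X \ pathEdges c (spiderSide n t M j))
      (Set.range (spiderTip n t M) ∪ spiderSide n t M j '' Set.Iic c)ᶜ := by
  subst hsum
  have hmod (i : ℕ) : i % n < n := Nat.mod_lt i (Nat.zero_lt_of_lt hj)
  have hleg {i : ℕ} (hi : i ∈ ({j, (j + 1) % n} : Finset ℕ)) : i < n := by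
    rcases Finset.mem_insert.1 hi with rfl | hi
    exacts [hj, Finset.mem_singleton.1 hi ▸ hmod _]
  have hlt {i : ℕ} (hi : i ∈ Finset.range n \ {j, (j + 1) % n}) : i < n :=
    Finset.mem_range.1 (Finset.mem_sdiff.1 hi).1
  refine Chargeable.of_ears (s := Finset.range n \ {j, (j + 1) % n}) (t := t) (a := M)
    (fun i hi => ht i (hlt hi)) ?_ ?_ (hX.mono (fun e he => ?_) subset_rfl) ?_ ?_ ?_
  · exact fun i hi => (h.isPathIn i (hlt hi)).injOn.mono fun x hx => hx.2.le
  · refine fun i hi i' hi' hne => Set.disjoint_left.2 ?_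
    rintro _ ⟨x, hx, rfl⟩ ⟨y, hy, hxy⟩
    exact h.ne i (hlt hi) i' (hlt hi') hne x ⟨hx.1, hx.2.le⟩ y ⟨hy.1, hy.2.le⟩ hxy.symm
  · obtain ⟨he, hears⟩ := Finset.mem_sdiff.1 he
    obtain ⟨heX, heside⟩ := Finset.mem_sdiff.1 he
    refine Finset.mem_sdiff.2 ⟨heX, fun hspider => ?_⟩
    obtain ⟨i, hi, hei⟩ := Finset.mem_biUnion.1 hspider
    exact hears (Finset.mem_biUnion.2 ⟨i, Finset.mem_sdiff.2
      ⟨hi, fun hij => heside (h.pathEdges_subset_spiderSide hj hij hei)⟩, hei⟩)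
  · exact fun i hi x hx hxV => hxV (h.mem_spiderVertices (hlt hi) hx.2.le)
  · rintro i hi x hx (hxtip | ⟨y, hy, hxy⟩)
    · exact h.notMem_range_spiderTip (fun i hi => Nat.zero_lt_of_lt (ht i hi)) (hlt hi) hx.2 hxtip
    · obtain ⟨i', hi', y', hy', hyy'⟩ := exists_spiderSide_eq hy
      have hii' := (h.eq_of_eq (hlt hi) (hleg hi') ⟨hx.1, hx.2.le⟩ hy' (hxy.symm.trans hyy'.symm)).1
      exact (Finset.mem_sdiff.1 hi).2 (hii' ▸ hi')
  · refine Set.compl_subset_compl.2 (Set.union_subset ?_ ?_)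
    · rintro _ ⟨i, rfl⟩
      exact h.mem_spiderVertices (hmod i) le_rfl
    · rintro _ ⟨x, hx, rfl⟩
      obtain ⟨i, hi, y, hy, hxy⟩ := exists_spiderSide_eq hx
      rw [← hxy]
      exact h.mem_spiderVertices (hleg hi) hy

lemma IsSpiderIn.canForceFreeCycle {π : PainterStrategy V 2} {l : List (Sym2 V)} {χ : Fin 2}
    (h : IsSpiderIn (paintedGraph π l χ) n t r M) (hl : ValidEdgeSeq l) (hn : k + 2 ≤ n)
    (ht : ∀ j < n, k + 1 ≤ t j) (hsum : ∀ j < n, t j + t ((j + 1) % n) = c)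
    (hX : Chargeable k (l.toFinset \ spiderEdges n t M) (↑(spiderVertices n t r M))ᶜ) :
    CanForceFreeCycle π k (c + 1) ∨ CanForceFreeCycle π k n := by
  have ht₀ : ∀ j < n, 0 < t j := fun j hj => Nat.zero_lt_of_lt (ht j hj)
  have hc : k + 1 ≤ c := (ht 0 (by omega)).trans (hsum 0 (by omega) ▸ Nat.le_add_right _ _)
  refine (h.isPolygonOfPaths (by omega) ht₀ hsum).canForceFreeCycle hc hn hl
    (fun j hj x hx => ?_) fun j hj => h.chargeable_sdiff_spiderSide ht hX hj (hsum j hj)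
  exact h.spiderSide_notMem_range ht₀ hj (by rwa [hsum j hj])

end SpiderPolygons

section Forcing

variable {V : Type} [Fintype V] {k m n : ℕ}

/-- As `n` is even, the legs can be given the lengths `m` and `m + 1` in turn, so that every path
between the ends of neighboring legs has length `2 * m + 1`. -/
lemma canForceFreeCycle_of_even (π : PainterStrategy V 2)
    (hV : 2 ^ (2 * (m + n)) ≤ Fintype.card V) (hn : Even n) (hkn : k + 2 ≤ n) (hkm : k + 1 ≤ m) :
    CanForceFreeCycle π k (2 * m + 2) ∨ CanForceFreeCycle π k n := by
  obtain ⟨l, hl, x, -, d, hd, htree⟩ := exists_binomialTrees π (A := Finset.univ) (l := []) hV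
    ⟨List.nodup_nil, by simp⟩ isForest_empty (by simp)
  obtain ⟨χ, hχ⟩ : ∃ χ, m + n ≤ d χ := by
    by_contra! hlt
    have h₀ := hlt 0
    have h₁ := hlt 1
    rw [Fin.sum_univ_two] at hd
    omega
  obtain ⟨M, hM⟩ := ((htree χ).of_le hχ).exists_isSpiderIn
  have hM' := hM.mono (u := fun j => m + j % 2) fun j _ => by omega
  refine hM'.canForceFreeCycle hl.valid hkn (fun j _ => by omega) (fun j _ => ?_)
    (hM'.chargeable_sdiff hl.isForest (Finset.biUnion_subset.2 fun j hj => ?_))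
  · rw [Nat.mod_mod_of_dvd _ hn.two_dvd]
    omega
  · exact pathEdges_subset_of_isPathIn (hM'.isPathIn j (Finset.mem_range.1 hj))

/-- For `n = k * (k + 1)`, a cycle of length `(n - 1) * n` yields one of length `n`. -/
lemma exists_forall_canForceFreeCycle (hk : 2 ≤ k) :
    ∃ a : ℕ, ∀ π : PainterStrategy (Fin a) 2, CanForceFreeCycle π k (k * (k + 1)) := by
  obtain ⟨h, hh⟩ := (Nat.even_mul_succ_self k).two_dvd
  have hkh : k + 1 ≤ h := by nlinarith
  have hmul : 2 * h ≤ (2 * h - 1) * h := Nat.mul_le_mul_right h (by omega)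
  obtain ⟨m, hm⟩ : ∃ m, (2 * h - 1) * h = m + 1 := Nat.exists_eq_add_of_le' (by omega)
  rw [hh]
  refine ⟨2 ^ (2 * (m + 2 * h)), fun π => ?_⟩
  rcases canForceFreeCycle_of_even (k := k) π (Fintype.card_fin _).ge (even_two_mul h) (by omega)
    (by omega) with hcycle | hcycle
  · rw [show 2 * m + 2 = (2 * h - 1) * (2 * h) by linarith] at hcycle
    have := hcycle.of_mul (by omega) (by omega)
    rwa [Nat.sub_add_cancel (by omega), or_self] at this
  · exact hcycle

end Forcing

end CycleGame

/-- deterministic part of Theorem 3. For every `ℓ ≥ 3`, Builder has a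
winning strategy in the deterministic `C_ℓ`-avoidance game with 2 colors and density
restriction `d = ℓ/(ℓ-1)`. -/
theorem statement8 (ℓ : ℕ) (hℓ : 3 ≤ ℓ) :
    BuilderWinsDensity (SimpleGraph.cycleGraph ℓ) 2 ((ℓ : ℝ) / ((ℓ : ℝ) - 1)) := by
  obtain ⟨k, rfl⟩ := Nat.exists_eq_add_of_le' (Nat.one_le_of_lt hℓ)
  have hk : 2 ≤ k := Nat.le_of_succ_le_succ hℓ
  have hk₀ : 0 < k := Nat.zero_lt_of_lt hk
  obtain ⟨a, ha⟩ := CycleGame.exists_forall_canForceFreeCycle hk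
  refine ⟨a, fun π => ?_⟩
  obtain ⟨l, hl, hcharge, χ, p, hp⟩ := (ha π).exists_isCycleIn hk₀
  refine ⟨l, hl, fun i => ?_, χ, hp.isCopy⟩
  rw [Nat.cast_add_one, add_sub_cancel_right]
  exact hcharge.densityLE_boardOf hk₀ (l.take_subset i)
end
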